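/- arXiv:math/0410246 — 2 statements merged into one kernel-verified Lean document; each statement's English description precedes it below -/
import Mathlib

section
/- There exist constants A₀, C > 0, depending only on n and a_1,…,a_{n-1}, with the following property. Let κ > 0 be a real number and let a be an integer with |a| ≥ A₀ (and a distinct from each a_k) such that K_a has no subfield other than ℚ and K_a itself, and such that the absolute value of the discriminant of K_a is at least |a|^κ. Then the subgroup of the unit group of the ring of integers of K_a generated by −1 and ξ−a_1, …, ξ−a_{n-1} has finite index at most C·κ^{1−n}. -/
open Polynomial

/-- The Ankeny–Brauer–Chowla polynomial
`f_a(x) = (x−a_1)⋯(x−a_{n-1})(x−a) − 1 ∈ ℤ[x]`. -/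
noncomputable def abcPolyZ (n : ℕ) (a : Fin (n - 1) → ℤ) (b : ℤ) : Polynomial ℤ :=
  (∏ i, (X - C (a i))) * (X - C b) - 1

/-- The Ankeny–Brauer–Chowla polynomial viewed in `ℚ[x]`. -/
noncomputable def abcPolyQ (n : ℕ) (a : Fin (n - 1) → ℤ) (b : ℤ) : Polynomial ℚ :=
  (abcPolyZ n a b).map (Int.castRingHom ℚ)

/-- `ℚ[x]/(p)` is a number field when `p` is irreducible. -/
noncomputable instance (p : Polynomial ℚ) [h : Fact (Irreducible p)] :
    NumberField (AdjoinRoot p) := by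
  haveI : CharZero (AdjoinRoot p) :=
    charZero_of_injective_algebraMap (algebraMap ℚ (AdjoinRoot p)).injective
  haveI : FiniteDimensional ℚ (AdjoinRoot p) :=
    Module.Finite.of_basis (AdjoinRoot.powerBasis h.out.ne_zero).basis
  exact ⟨⟩

open NumberField

/-!
A unit `η ≠ ±1` of a primitive totally real field `K` of degree `n` generates `K`, so `disc K`
divides the discriminant of the minimal polynomial of `η`, and `|disc K| ≤ (2 H) ^ (n (n - 1))`
where `H` is the largest absolute value of a conjugate of `η`. Hence every such unit has a
logarithmic vector of norm at least `log |disc K| / (3 n²)`.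

For large `|a|` the polynomial `f_a` has one real root near each `a_k` and one near `a`. At the
root near `a_k` the unit `ξ - a_k` has logarithm close to `-log |a|`, while the other `ξ - a_i`
have bounded logarithms, so the matrix of logarithms is diagonally dominant and the vectors of the
`ξ - a_i`, of norm at most `2 log |a|`, span the space containing the logarithmic vectors of all
units.

Cut the fundamental parallelepiped of these vectors into equal cells: two units with coordinates in
the same cell modulo `ℤ` differ, up to the `ξ - a_i`, by a unit with a short logarithmic vector,
that is by `±1`. The index is therefore at most the number of cells.
-/

open Module (finrank)
open scoped IntermediateField

theorem norm_eval_derivative_le_of_mem_roots {F : Type*} [NormedField F] {p : F[X]}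
    (hsplits : p.Splits) (hp : p.Monic) {B : ℝ} (hB : ∀ z ∈ p.roots, ‖z‖ ≤ B) {x : F}
    (hx : x ∈ p.roots) : ‖p.derivative.eval x‖ ≤ (2 * B) ^ (p.natDegree - 1) := by
  classical
  rw [hsplits.eval_root_derivative hp hx, hsplits.natDegree_eq_card_roots,
    ← Nat.pred_eq_sub_one, ← Multiset.card_erase_of_mem hx, ← Multiset.card_map (x - ·)]
  refine (map_multiset_prod (normHom : F →*₀ ℝ) _).trans_le <|
    Multiset.prod_map_le_pow_card (fun y _ ↦ norm_nonneg y) ?_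
  simp only [Multiset.mem_map, forall_exists_index, and_imp, forall_apply_eq_imp_iff₂]
  intro z hz
  change ‖x - z‖ ≤ 2 * B
  linarith [norm_sub_le x z, hB x hx, hB z (Multiset.mem_of_mem_erase hz)]

section Discriminant

variable {K : Type*} [Field K] [NumberField K]

theorem norm_le_house_of_mem_roots_minpoly {x : K} {z : ℂ}
    (hz : z ∈ ((minpoly ℚ x).map (algebraMap ℚ ℂ)).roots) : ‖z‖ ≤ house x := by
  have hroot : z ∈ (minpoly ℚ x).rootSet ℂ := by
    classical
    rwa [rootSet, aroots, Finset.mem_coe, Multiset.mem_toFinset]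
  rw [← Embeddings.range_eval_eq_rootSet_minpoly K ℂ x] at hroot
  obtain ⟨φ, rfl⟩ := hroot
  exact norm_embedding_le_house x φ

theorem norm_embedding_aeval_derivative_minpoly_le (x : K) (φ : K →+* ℂ) :
    ‖φ (aeval x (minpoly ℚ x).derivative)‖ ≤ (2 * house x) ^ ((minpoly ℚ x).natDegree - 1) := by
  have hmonic : (minpoly ℚ x).Monic := minpoly.monic (Algebra.IsIntegral.isIntegral x)
  have hroot : φ x ∈ ((minpoly ℚ x).map (algebraMap ℚ ℂ)).roots := by
    have hker : aeval (φ.toRatAlgHom x) (minpoly ℚ x) = 0 := by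
      rw [aeval_algHom_apply, minpoly.aeval, map_zero]
    rw [mem_roots (hmonic.map _).ne_zero, IsRoot, eval_map_algebraMap]
    exact hker
  have hbound := norm_eval_derivative_le_of_mem_roots (IsAlgClosed.splits _) (hmonic.map _)
    (fun _ ↦ norm_le_house_of_mem_roots_minpoly) hroot
  rw [derivative_map, eval_map_algebraMap, natDegree_map] at hbound
  rw [← RingHom.toRatAlgHom_apply, ← aeval_algHom_apply, RingHom.toRatAlgHom_apply]
  exact hbound

theorem abs_norm_le_pow_of_norm_embedding_le {x : K} {B : ℝ} (hB : ∀ φ : K →+* ℂ, ‖φ x‖ ≤ B) :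
    |(Algebra.norm ℚ x : ℝ)| ≤ B ^ finrank ℚ K := by
  have hnorm := congrArg norm (Algebra.norm_eq_prod_embeddings ℚ ℂ x)
  rw [eq_ratCast, Complex.norm_ratCast, norm_prod] at hnorm
  calc |(Algebra.norm ℚ x : ℝ)| = ∏ φ : K →ₐ[ℚ] ℂ, ‖φ x‖ := hnorm
    _ ≤ ∏ _φ : K →ₐ[ℚ] ℂ, B := by gcongr with φ; exact hB φ
    _ = B ^ finrank ℚ K := by rw [Finset.prod_const, Finset.card_univ, AlgHom.card]

theorem discr_dvd_norm_aeval_derivative_minpoly {x : 𝓞 K} (hx : ℚ⟮(x : K)⟯ = ⊤) :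
    discr K ∣ Algebra.norm ℤ (aeval x (minpoly ℤ x).derivative) := by
  have hadjoin : Algebra.adjoin ℚ {(x : K)} = ⊤ := by
    rw [← IntermediateField.adjoin_simple_toSubalgebra_of_isAlgebraic (.of_finite ℚ _), hx,
      IntermediateField.top_toSubalgebra]
  have hdvd := Ideal.absNorm_dvd_norm_of_mem (aeval_derivative_mem_differentIdeal ℤ ℚ K x hadjoin)
  rwa [absNorm_differentIdeal K, Int.natAbs_dvd] at hdvd

theorem abs_discr_le_two_mul_house_pow {x : 𝓞 K} (hx : ℚ⟮(x : K)⟯ = ⊤) :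
    |(discr K : ℝ)| ≤ (2 * house (x : K)) ^ (finrank ℚ K * (finrank ℚ K - 1)) := by
  set y : 𝓞 K := aeval x (minpoly ℤ x).derivative
  have hyK : (y : K) = aeval (x : K) (minpoly ℚ (x : K)).derivative := by
    rw [minpoly.isIntegrallyClosed_eq_field_fractions ℚ K x.isIntegral, derivative_map,
      aeval_map_algebraMap, aeval_algebraMap_apply]
  have hdeg : (minpoly ℚ (x : K)).natDegree = finrank ℚ K :=
    (Field.primitive_element_iff_minpoly_natDegree_eq ℚ _).mp hx
  have hy0 : Algebra.norm ℤ y ≠ 0 := by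
    rw [Algebra.norm_ne_zero_iff, ← RingOfIntegers.coe_ne_zero_iff]
    change (y : K) ≠ 0
    rw [hyK]
    exact (Algebra.IsSeparable.isSeparable ℚ _).aeval_derivative_ne_zero (minpoly.aeval _ _)
  have hle : |discr K| ≤ |Algebra.norm ℤ y| :=
    Int.le_of_dvd (abs_pos.mpr hy0) ((abs_dvd_abs _ _).mpr <|
      discr_dvd_norm_aeval_derivative_minpoly hx)
  calc |(discr K : ℝ)| ≤ |(Algebra.norm ℤ y : ℝ)| := mod_cast hle
    _ = |(Algebra.norm ℚ (y : K) : ℝ)| := by rw [← Algebra.coe_norm_int, Rat.cast_intCast]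
    _ ≤ ((2 * house (x : K)) ^ (finrank ℚ K - 1)) ^ finrank ℚ K := by
      refine abs_norm_le_pow_of_norm_embedding_le fun φ ↦ ?_
      rw [hyK, ← hdeg]
      exact norm_embedding_aeval_derivative_minpoly_le (x : K) φ
    _ = (2 * house (x : K)) ^ (finrank ℚ K * (finrank ℚ K - 1)) := by
      rw [← pow_mul, mul_comm (finrank ℚ K)]

end Discriminant

section TotallyReal

variable {K : Type*} [Field K] [NumberField K]

theorem sqrt_two_le_house [IsTotallyReal K] {x : 𝓞 K} (h0 : x ≠ 0) (h1 : x ≠ 1) (hneg1 : x ≠ -1) :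
    √2 ≤ house (x : K) := by
  have hy : x ^ 2 - 1 ≠ 0 := by
    rw [sub_ne_zero, Ne, sq_eq_one_iff]
    tauto
  obtain ⟨φ, hφ⟩ := exists_conjugate_one_le_norm hy
  have hreal := IsTotallyReal.complexEmbedding_isReal φ
  set t : ℝ := hreal.embedding x with ht
  have hφx : φ x = t := (hreal.coe_embedding_apply _).symm
  have ht0 : 0 < t ^ 2 := by
    have : t ≠ 0 := by simpa [ht] using h0
    positivity
  have ht1 : 1 ≤ |t ^ 2 - 1| := by
    have hφt : φ ((x ^ 2 - 1 : 𝓞 K) : K) = ((t ^ 2 - 1 : ℝ) : ℂ) := by simp [hφx]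
    rwa [hφt, Complex.norm_real, Real.norm_eq_abs] at hφ
  have ht2 : 2 ≤ |t| ^ 2 := by
    rw [sq_abs]
    rcases le_abs.mp ht1 with h | h <;> linarith
  calc √2 ≤ |t| := (Real.sqrt_le_left (abs_nonneg t)).mpr ht2
    _ = ‖φ x‖ := by rw [hφx, Complex.norm_real, Real.norm_eq_abs]
    _ ≤ house (x : K) := norm_embedding_le_house _ φ

theorem unit_eq_one_or_eq_neg_one_of_mem_bot {η : (𝓞 K)ˣ}
    (hη : (η : K) ∈ (⊥ : IntermediateField ℚ K)) : η = 1 ∨ η = -1 := by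
  obtain ⟨q, hq⟩ := IntermediateField.mem_bot.mp hη
  have hnorm : |q| ^ finrank ℚ K = 1 := by
    rw [← abs_pow, ← Algebra.norm_algebraMap, hq]
    exact Units.norm K η
  have hq1 : |q| = 1 := (pow_eq_one_iff_of_nonneg (abs_nonneg q) Module.finrank_pos.ne').mp hnorm
  rcases eq_or_eq_neg_of_abs_eq hq1 with rfl | rfl
  · left; apply Units.coe_injective K; simpa using hq.symm
  · right; apply Units.coe_injective K; simpa using hq.symm

theorem log_abs_discr_le_log_house [IsTotallyReal K]
    (hprim : ∀ F : IntermediateField ℚ K, F = ⊥ ∨ F = ⊤) {η : (𝓞 K)ˣ} (h1 : η ≠ 1)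
    (hneg1 : η ≠ -1) :
    Real.log |(discr K : ℝ)| ≤ 3 * (finrank ℚ K : ℝ) ^ 2 * Real.log (house (η : K)) := by
  have hgen : ℚ⟮(η : K)⟯ = ⊤ := by
    refine (hprim _).resolve_left fun hbot ↦ ?_
    rw [IntermediateField.adjoin_simple_eq_bot_iff] at hbot
    exact (unit_eq_one_or_eq_neg_one_of_mem_bot hbot).elim h1 hneg1
  have hhouse : √2 ≤ house (η : K) :=
    sqrt_two_le_house η.ne_zero (mt Units.val_eq_one.mp h1) fun h ↦ hneg1 (Units.ext h)
  have htwo_le : 2 ≤ house (η : K) ^ 2 := (Real.sqrt_le_left (house_nonneg _)).mp hhouse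
  have hone_le : 1 ≤ house (η : K) := (Real.one_lt_sqrt_two.trans_le hhouse).le
  have htwo : 2 * house (η : K) ≤ house (η : K) ^ 3 := by nlinarith
  have hdiscr : |(discr K : ℝ)| ≤ house (η : K) ^ (3 * finrank ℚ K ^ 2) :=
    calc |(discr K : ℝ)| ≤ (2 * house (η : K)) ^ (finrank ℚ K * (finrank ℚ K - 1)) :=
          abs_discr_le_two_mul_house_pow hgen
      _ ≤ (house (η : K) ^ 3) ^ (finrank ℚ K ^ 2) := by
        refine (pow_le_pow_left₀ (by positivity) htwo _).trans
          (pow_le_pow_right₀ (one_le_pow₀ hone_le) ?_)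
        rw [sq]
        gcongr
        exact Nat.sub_le _ _
      _ = house (η : K) ^ (3 * finrank ℚ K ^ 2) := (pow_mul _ _ _).symm
  have hlog := Real.log_le_log (by simpa using discr_ne_zero K) hdiscr
  rw [Real.log_pow] at hlog
  exact_mod_cast hlog

end TotallyReal

theorem abs_fract_sub_fract_lt_of_floor_eq {N : ℕ} (hN : 0 < N) {s t : ℝ}
    (h : ⌊N * Int.fract s⌋₊ = ⌊N * Int.fract t⌋₊) : |Int.fract s - Int.fract t| < 1 / N := by
  have hN' : (0 : ℝ) < N := mod_cast hN
  have hscaled : |N * Int.fract s - N * Int.fract t| < 1 := by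
    apply Int.abs_sub_lt_one_of_floor_eq_floor
    rw [← Int.natCast_floor_eq_floor (by positivity),
      ← Int.natCast_floor_eq_floor (by positivity), h]
  rwa [← mul_sub, abs_mul, abs_of_pos hN', ← lt_div_iff₀' hN'] at hscaled

section Pigeonhole

variable {A V ι : Type*} [AddCommGroup A] [NormedAddCommGroup V] [NormedSpace ℝ V] [Fintype ι]
  {f : A →+ V} {u : ι → A} {H : AddSubgroup A} {S m : ℝ}

theorem sub_mem_of_abs_fract_sub_fract_le (hu : ∀ i, u i ∈ H) (hS : ∀ i, ‖f (u i)‖ ≤ S)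
    (hmem : ∀ x, ‖f x‖ < m → x ∈ H) {x y : A} {s t : ι → ℝ} (hs : f x = ∑ i, s i • f (u i))
    (ht : f y = ∑ i, t i • f (u i)) {ε : ℝ}
    (hε : ∀ i, |Int.fract (s i) - Int.fract (t i)| ≤ ε) (hm : Fintype.card ι * (ε * S) < m) :
    x - y ∈ H := by
  set v : A := ∑ i, (⌊s i⌋ - ⌊t i⌋) • u i
  have hv : v ∈ H := sum_mem fun i _ ↦ zsmul_mem (hu i) _
  have hf : f (x - y - v) = ∑ i, (Int.fract (s i) - Int.fract (t i)) • f (u i) := by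
    simp only [v, map_sub, map_sum, map_zsmul, hs, ht, ← Finset.sum_sub_distrib]
    refine Finset.sum_congr rfl fun i _ ↦ ?_
    rw [← Int.cast_smul_eq_zsmul ℝ, ← sub_smul, ← sub_smul, Int.fract, Int.fract]
    push_cast
    congr 1
    ring
  have hlt : ‖f (x - y - v)‖ < m :=
    calc ‖f (x - y - v)‖ ≤ ∑ _i : ι, ε * S := by
          rw [hf]
          refine norm_sum_le_of_le _ fun i _ ↦ ?_
          rw [norm_smul]
          exact mul_le_mul (hε i) (hS i) (norm_nonneg _) ((abs_nonneg _).trans (hε i))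
      _ = Fintype.card ι * (ε * S) := by rw [Finset.sum_const, Finset.card_univ, nsmul_eq_mul]
      _ < m := hm
  simpa only [sub_add_cancel] using add_mem (hmem _ hlt) hv

theorem index_ne_zero_and_index_le_pow_of_norm_lt (hu : ∀ i, u i ∈ H) (hS : ∀ i, ‖f (u i)‖ ≤ S)
    (hmem : ∀ x, ‖f x‖ < m → x ∈ H)
    (hspan : ∀ x, f x ∈ Submodule.span ℝ (Set.range fun i ↦ f (u i))) {N : ℕ}
    (hN : 0 < N) (hm : Fintype.card ι * S < N * m) :
    H.index ≠ 0 ∧ H.index ≤ N ^ Fintype.card ι := by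
  simp only [Submodule.mem_span_range_iff_exists_fun] at hspan
  choose t ht using hspan
  have hfloor (x : A) (i : ι) : ⌊N * Int.fract (t x i)⌋₊ < N := by
    rw [Nat.floor_lt (by positivity)]
    exact mul_lt_of_lt_one_right (mod_cast hN) (Int.fract_lt_one _)
  let box (q : A ⧸ H) (i : ι) : Fin N := ⟨⌊N * Int.fract (t q.out i)⌋₊, hfloor _ _⟩
  have hbox : Function.Injective box := by
    intro p q hpq
    rw [← p.out_eq', ← q.out_eq', eq_comm, QuotientAddGroup.eq, neg_add_eq_sub]
    refine sub_mem_of_abs_fract_sub_fract_le hu hS hmem (ht _).symm (ht _).symm (ε := 1 / N)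
      (fun i ↦ (abs_fract_sub_fract_lt_of_floor_eq hN (congrArg Fin.val (congrFun hpq i))).le) ?_
    rw [one_div_mul_eq_div, ← mul_div_assoc, div_lt_iff₀' (mod_cast hN)]
    exact hm
  have := Finite.of_injective box hbox
  refine ⟨H.index_ne_zero_of_finite, (Nat.card_le_card_of_injective box hbox).trans_eq ?_⟩
  rw [Nat.card_fun, Nat.card_eq_fintype_card, Nat.card_eq_fintype_card, Fintype.card_fin]

theorem index_ne_zero_and_index_le_of_norm_lt (hu : ∀ i, u i ∈ H) (hS : ∀ i, ‖f (u i)‖ ≤ S)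
    (hmem : ∀ x, ‖f x‖ < m → x ∈ H)
    (hspan : ∀ x, f x ∈ Submodule.span ℝ (Set.range fun i ↦ f (u i))) (hm : 0 < m) :
    H.index ≠ 0 ∧ (H.index : ℝ) ≤ (Fintype.card ι * S / m + 1) ^ Fintype.card ι := by
  have hS0 : 0 ≤ Fintype.card ι * S := by
    rw [← nsmul_eq_mul, ← Finset.card_univ, ← Finset.sum_const]
    exact Finset.sum_nonneg fun i _ ↦ (norm_nonneg _).trans (hS i)
  have hN := Nat.lt_floor_add_one (Fintype.card ι * S / m)
  rw [div_lt_iff₀ hm] at hN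
  obtain ⟨hne, hle⟩ := index_ne_zero_and_index_le_pow_of_norm_lt hu hS hmem hspan (Nat.succ_pos _)
    (mod_cast hN)
  refine ⟨hne, (Nat.cast_le.mpr hle).trans ?_⟩
  push_cast
  gcongr
  exact Nat.floor_le (by positivity)

end Pigeonhole

section LinearAlgebra

variable {ι J : Type*} [Fintype J]

theorem eq_zero_of_sum_eq_zero_of_forall_some {M : Type*} [AddCommMonoid M] (e : Option ι ≃ J)
    {z : J → M} (hz : ∑ j, z j = 0) (hsome : ∀ k, z (e (some k)) = 0) : z = 0 := by
  have hne (j : J) (hj : j ≠ e none) : z j = 0 := by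
    obtain ⟨_ | k, rfl⟩ := e.surjective j
    · exact absurd rfl hj
    · exact hsome k
  have hnone : z (e none) = 0 := by rwa [Fintype.sum_eq_single _ hne] at hz
  ext j
  by_cases hj : j = e none
  · rw [hj, hnone, Pi.zero_apply]
  · exact hne j hj

theorem mem_span_range_of_sum_eq_zero_of_det_ne_zero {F : Type*} [Field F] [Fintype ι]
    [DecidableEq ι] (e : Option ι ≃ J) {x : ι → J → F} (hx : ∀ i, ∑ j, x i j = 0)
    (hdet : (Matrix.of fun k i ↦ x i (e (some k))).det ≠ 0) {y : J → F} (hy : ∑ j, y j = 0) :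
    y ∈ Submodule.span F (Set.range x) := by
  set M : Matrix ι ι F := Matrix.of fun k i ↦ x i (e (some k))
  set v : ι → F := fun k ↦ y (e (some k))
  set c : ι → F := M⁻¹.mulVec v
  have hMc : M.mulVec c = v := by
    rw [Matrix.mulVec_mulVec, Matrix.mul_nonsing_inv _ hdet.isUnit, Matrix.one_mulVec]
  refine Submodule.mem_span_range_iff_exists_fun F |>.mpr ⟨c, sub_eq_zero.mp ?_⟩
  refine eq_zero_of_sum_eq_zero_of_forall_some e ?_ fun k ↦ ?_
  · simp only [Pi.sub_apply, Finset.sum_apply, Pi.smul_apply, smul_eq_mul,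
      Finset.sum_sub_distrib, hy, sub_zero]
    rw [Finset.sum_comm]
    simp only [← Finset.mul_sum, hx, mul_zero, Finset.sum_const_zero]
  · rw [Pi.sub_apply, sub_eq_zero, Finset.sum_apply]
    refine Eq.trans ?_ (congrFun hMc k)
    exact Finset.sum_congr rfl fun i _ ↦ mul_comm _ _

end LinearAlgebra

section UnitLog

variable {K : Type*} [Field K] [NumberField K]

/-- The logarithmic embedding of the units of `K`, with all infinite places as coordinates.
Mathlib's `NumberField.Units.logEmbedding` omits one place; keeping them all makes the sup norm
control the house. -/
noncomputable def unitLog (K : Type*) [Field K] [NumberField K] :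
    Additive (𝓞 K)ˣ →+ (InfinitePlace K → ℝ) where
  toFun η w := w.mult * Real.log (w (η.toMul : K))
  map_zero' := by ext; simp
  map_add' η θ := by
    ext w
    simp [Real.log_mul, mul_add]

theorem unitLog_apply (η : (𝓞 K)ˣ) (w : InfinitePlace K) :
    unitLog K (.ofMul η) w = w.mult * Real.log (w (η : K)) := rfl

theorem sum_unitLog (η : (𝓞 K)ˣ) : ∑ w, unitLog K (.ofMul η) w = 0 :=
  Units.sum_mult_mul_log η

theorem log_house_le_norm_unitLog (η : (𝓞 K)ˣ) :
    Real.log (house (η : K)) ≤ ‖unitLog K (.ofMul η)‖ := by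
  refine Real.log_le_iff_le_exp ?_ |>.mpr ?_
  · exact one_pos.trans_le (one_le_house_of_isIntegral η.val.isIntegral_coe (Units.coe_ne_zero η))
  refine (pi_norm_le_iff_of_nonneg (Real.exp_pos _).le).mpr fun φ ↦ ?_
  change ‖φ (η : K)‖ ≤ _
  set w := InfinitePlace.mk φ
  have hmult : (1 : ℝ) ≤ w.mult := mod_cast w.mult_pos
  rw [← Real.log_le_iff_le_exp (norm_pos_iff.mpr <| (map_ne_zero φ).mpr (Units.coe_ne_zero η))]
  calc Real.log (w (η : K)) ≤ |Real.log (w (η : K))| := le_abs_self _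
    _ ≤ w.mult * |Real.log (w (η : K))| := le_mul_of_one_le_left (abs_nonneg _) hmult
    _ = ‖unitLog K (.ofMul η) w‖ := by
      rw [unitLog_apply, Real.norm_eq_abs, abs_mul, Nat.abs_cast]
    _ ≤ ‖unitLog K (.ofMul η)‖ := norm_le_pi_norm _ w

theorem log_abs_discr_le_norm_unitLog [IsTotallyReal K]
    (hprim : ∀ F : IntermediateField ℚ K, F = ⊥ ∨ F = ⊤) {η : (𝓞 K)ˣ} (h1 : η ≠ 1)
    (hneg1 : η ≠ -1) :
    Real.log |(discr K : ℝ)| ≤ 3 * (finrank ℚ K : ℝ) ^ 2 * ‖unitLog K (.ofMul η)‖ :=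
  (log_abs_discr_le_log_house hprim h1 hneg1).trans <| by
    gcongr
    exact log_house_le_norm_unitLog η

variable {ι : Type*} [Fintype ι] [DecidableEq ι]

theorem unitLog_mem_span_of_sum_lt (e : Option ι ≃ InfinitePlace K) {u : ι → (𝓞 K)ˣ}
    (hdom : ∀ k, ∑ i ∈ Finset.univ.erase k, |unitLog K (.ofMul (u i)) (e (some k))| <
      |unitLog K (.ofMul (u k)) (e (some k))|) (η : Additive (𝓞 K)ˣ) :
    unitLog K η ∈ Submodule.span ℝ (Set.range fun i ↦ unitLog K (.ofMul (u i))) :=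
  mem_span_range_of_sum_eq_zero_of_det_ne_zero e (fun i ↦ sum_unitLog (u i))
    (det_ne_zero_of_sum_row_lt_diag hdom) (sum_unitLog η.toMul)

theorem mem_of_norm_unitLog_lt [IsTotallyReal K]
    (hprim : ∀ F : IntermediateField ℚ K, F = ⊥ ∨ F = ⊤) {H : Subgroup (𝓞 K)ˣ} (hneg1 : -1 ∈ H)
    {η : (𝓞 K)ˣ}
    (hη : ‖unitLog K (.ofMul η)‖ < Real.log |(discr K : ℝ)| / (3 * (finrank ℚ K : ℝ) ^ 2)) :
    η ∈ H := by
  by_contra hηH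
  refine hη.not_ge (div_le_of_le_mul₀ (by positivity) (norm_nonneg _) ?_)
  rw [mul_comm]
  exact log_abs_discr_le_norm_unitLog hprim (ne_of_mem_of_not_mem H.one_mem hηH).symm
    (ne_of_mem_of_not_mem hneg1 hηH).symm

theorem unitLog_ofMul_neg_one : unitLog K (.ofMul (-1)) = 0 := by
  ext w
  have hneg : w (-1 : K) = 1 := (w.1.map_neg 1).trans w.1.map_one
  simp [unitLog_apply, hneg]

theorem log_abs_discr_le_of_unitLog_ne_zero [IsTotallyReal K]
    (hprim : ∀ F : IntermediateField ℚ K, F = ⊥ ∨ F = ⊤) {η : (𝓞 K)ˣ}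
    (hη : unitLog K (.ofMul η) ≠ 0) :
    Real.log |(discr K : ℝ)| ≤ 3 * (finrank ℚ K : ℝ) ^ 2 * ‖unitLog K (.ofMul η)‖ :=
  log_abs_discr_le_norm_unitLog hprim (fun h ↦ hη (h ▸ map_zero _))
    fun h ↦ hη (h ▸ unitLog_ofMul_neg_one)

theorem finrank_eq_card_infinitePlace [IsTotallyReal K] :
    finrank ℚ K = Fintype.card (InfinitePlace K) := by
  rw [IsTotallyReal.finrank, InfinitePlace.card_eq_nrRealPlaces_add_nrComplexPlaces,
    IsTotallyReal.nrComplexPlaces_eq_zero, add_zero]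

theorem index_closure_neg_one_union_range_le [IsTotallyReal K] [Nonempty ι]
    (hprim : ∀ F : IntermediateField ℚ K, F = ⊥ ∨ F = ⊤)
    (e : Option ι ≃ InfinitePlace K) {u : ι → (𝓞 K)ˣ}
    (hdom : ∀ k, ∑ i ∈ Finset.univ.erase k, |unitLog K (.ofMul (u i)) (e (some k))| <
      |unitLog K (.ofMul (u k)) (e (some k))|)
    {S : ℝ} (hS : ∀ i, ‖unitLog K (.ofMul (u i))‖ ≤ S) :
    (Subgroup.closure ({-1} ∪ Set.range u)).index ≠ 0 ∧
      ((Subgroup.closure ({-1} ∪ Set.range u)).index : ℝ) ≤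
        (3 * (finrank ℚ K : ℝ) ^ 3 * (S / Real.log |(discr K : ℝ)|)) ^ Fintype.card ι := by
  set H := Subgroup.closure ({-1} ∪ Set.range u)
  set n := finrank ℚ K with hn_def
  set D := Real.log |(discr K : ℝ)|
  have hneg : -1 ∈ H := Subgroup.subset_closure (by simp)
  have hu (i : ι) : u i ∈ H := Subgroup.subset_closure (by simp)
  have hn : n = Fintype.card ι + 1 := by
    rw [hn_def, finrank_eq_card_infinitePlace, ← Fintype.card_congr e, Fintype.card_option]
  have hn0 : (0 : ℝ) < n := by rw [hn]; positivity
  have hD : 0 < D := by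
    have hone_lt : 1 < n := hn ▸ Nat.lt_add_of_pos_left Fintype.card_pos
    exact Real.log_pos (mod_cast one_lt_two.trans (abs_discr_gt_two hone_lt))
  obtain ⟨k⟩ := ‹Nonempty ι›
  have hS0 : 0 ≤ S := (norm_nonneg _).trans (hS k)
  have hDS : D ≤ 3 * n ^ 2 * S := by
    have hk : unitLog K (.ofMul (u k)) ≠ 0 := fun h ↦
      (Finset.sum_nonneg fun _ _ ↦ abs_nonneg _).not_gt (by simpa [h] using hdom k)
    exact (log_abs_discr_le_of_unitLog_ne_zero hprim hk).trans (by gcongr; exact hS k)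
  obtain ⟨hne, hle⟩ := index_ne_zero_and_index_le_of_norm_lt (f := unitLog K) (H := H.toAddSubgroup)
    (u := fun i ↦ .ofMul (u i)) hu hS (fun _ ↦ mem_of_norm_unitLog_lt hprim hneg)
    (unitLog_mem_span_of_sum_lt e hdom) (by positivity)
  rw [Subgroup.index_toAddSubgroup] at hne hle
  refine ⟨hne, hle.trans (pow_le_pow_left₀ (by positivity) ?_ _)⟩
  calc Fintype.card ι * S / (D / (3 * n ^ 2)) + 1
      ≤ Fintype.card ι * S / (D / (3 * n ^ 2)) + 3 * n ^ 2 * S / D := by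
        gcongr
        rwa [one_le_div hD]
    _ = 3 * (n : ℝ) ^ 2 * (Fintype.card ι + 1) * (S / D) := by field_simp
    _ = 3 * (n : ℝ) ^ 3 * (S / D) := by rw [hn]; push_cast; ring

end UnitLog

section ProductEqOne

theorem half_le_abs_sub_intCast {x : ℝ} {z z' : ℤ} (hx : |x - z| ≤ 1 / 2) (hz : z' ≠ z) :
    1 / 2 ≤ |x - z'| := by
  have hone : (1 : ℝ) ≤ |(z' : ℝ) - z| := mod_cast Int.one_le_abs (sub_ne_zero.mpr hz)
  have htri := abs_sub_le (z' : ℝ) x z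
  rw [abs_sub_comm (z' : ℝ) x] at htri
  linarith

variable {J : Type*} [Fintype J] {c : J → ℤ}

theorem one_lt_abs_prod_sub_of_abs_sub_eq_half (hc : c.Injective) {j k : J}
    (hjk : 2 ^ Fintype.card J ≤ |(c k : ℝ) - c j|) {x : ℝ} (hx : |x - c k| = 1 / 2) :
    1 < |∏ i, (x - c i)| := by
  classical
  have hhalf (i : J) : 1 / 2 ≤ |x - c i| := by
    rcases eq_or_ne i k with rfl | hik
    · exact hx.ge
    · exact half_le_abs_sub_intCast hx.le (hc.ne hik)
  have hcard : Fintype.card J = (Finset.univ.erase j).card + 1 :=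
    (Finset.card_erase_add_one (Finset.mem_univ j)).symm
  have hfar : 2 ^ (Finset.univ.erase j).card < |x - c j| := by
    have htri := abs_sub_le (c k : ℝ) x (c j)
    rw [abs_sub_comm (c k : ℝ) x, hx] at htri
    have hpow : (1 : ℝ) ≤ 2 ^ (Finset.univ.erase j).card := one_le_pow₀ one_le_two
    rw [hcard, pow_succ] at hjk
    linarith
  calc (1 : ℝ) = 2 ^ (Finset.univ.erase j).card * (1 / 2) ^ (Finset.univ.erase j).card := by
        rw [← mul_pow]; norm_num
    _ < |x - c j| * (1 / 2) ^ (Finset.univ.erase j).card := by gcongr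
    _ ≤ |x - c j| * ∏ i ∈ Finset.univ.erase j, |x - c i| := by
        rw [← Finset.prod_const]
        gcongr
        exact hhalf _
    _ = |∏ i, (x - c i)| := by
        rw [Finset.mul_prod_erase _ (fun i ↦ |x - c i|) (Finset.mem_univ j), Finset.abs_prod]

theorem prod_sub_half_mul_prod_add_half_neg (hc : c.Injective) (k : J) :
    (∏ i, ((c k : ℝ) - 1 / 2 - c i)) * ∏ i, ((c k : ℝ) + 1 / 2 - c i) < 0 := by
  classical
  rw [← Finset.prod_mul_distrib, ← Finset.mul_prod_erase _ _ (Finset.mem_univ k)]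
  refine mul_neg_of_neg_of_pos (by ring_nf; norm_num) (Finset.prod_pos fun i hi ↦ ?_)
  have hone : (1 : ℝ) ≤ |(c k : ℝ) - c i| :=
    mod_cast Int.one_le_abs (sub_ne_zero.mpr (hc.ne (Finset.ne_of_mem_erase hi).symm))
  nlinarith [sq_abs ((c k : ℝ) - c i)]

theorem exists_prod_sub_eq_one (hc : c.Injective) {j k : J}
    (hjk : 2 ^ Fintype.card J ≤ |(c k : ℝ) - c j|) :
    ∃ x : ℝ, |x - c k| < 1 / 2 ∧ ∏ i, (x - c i) = 1 := by
  set P : ℝ → ℝ := fun x ↦ ∏ i, (x - c i)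
  have hend {x : ℝ} (hx : |x - c k| = 1 / 2) : 1 < |P x| :=
    one_lt_abs_prod_sub_of_abs_sub_eq_half hc hjk hx
  have hleft : 1 < |P (c k - 1 / 2)| := hend (by norm_num)
  have hright : 1 < |P (c k + 1 / 2)| := hend (by norm_num)
  have hsign : P (c k - 1 / 2) * P (c k + 1 / 2) < 0 := prod_sub_half_mul_prod_add_half_neg hc k
  have hmem : 1 ∈ Set.uIcc (P (c k - 1 / 2)) (P (c k + 1 / 2)) := by
    rw [Set.mem_uIcc]
    rcases mul_neg_iff.mp hsign with ⟨hpos, hneg⟩ | ⟨hneg, hpos⟩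
    · rw [abs_of_pos hpos] at hleft
      exact .inr ⟨by linarith, hleft.le⟩
    · rw [abs_of_pos hpos] at hright
      exact .inl ⟨by linarith, hright.le⟩
  obtain ⟨x, hx, hPx⟩ := intermediate_value_uIcc (Continuous.continuousOn (by fun_prop)) hmem
  refine ⟨x, lt_of_le_of_ne ?_ fun h ↦ ?_, hPx⟩
  · rw [Set.uIcc_of_le (by linarith)] at hx
    exact abs_le.mpr ⟨by linarith [hx.1], by linarith [hx.2]⟩
  · simpa [hPx] using hend h

end ProductEqOne

section LogEstimates

-- Since `Real.log x = Real.log |x|`, no absolute values are needed inside the logarithms.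
theorem abs_log_le_log_of_inv_le_abs {x M : ℝ} (hM : 0 < M) (hle : M⁻¹ ≤ |x|) (hge : |x| ≤ M) :
    |Real.log x| ≤ Real.log M := by
  have hx : 0 < |x| := (inv_pos.mpr hM).trans_le hle
  rw [← Real.log_abs, abs_le, ← Real.log_inv]
  exact ⟨Real.log_le_log (inv_pos.mpr hM) hle, Real.log_le_log hx hge⟩

theorem abs_log_sub_log_le_log_two {x y : ℝ} (hy : y ≠ 0) (hxy : |x - y| ≤ |y| / 2) :
    |Real.log x - Real.log y| ≤ Real.log 2 := by
  have hdist : |x / y - 1| ≤ 1 / 2 := by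
    rw [div_sub_one hy, abs_div, div_le_iff₀ (abs_pos.mpr hy)]
    linarith
  obtain ⟨hlo, hhi⟩ := abs_le.mp hdist
  have hpos : 0 < x / y := by linarith
  have hx : x ≠ 0 := (div_ne_zero_iff.mp hpos.ne').1
  rw [← Real.log_div hx hy]
  apply abs_log_le_log_of_inv_le_abs two_pos <;> rw [abs_of_pos hpos] <;> linarith

variable {ι : Type*} [Fintype ι] {a : ι → ℤ} {b : ℤ}

/-- The size of the coefficients `a i`, fixed so that each `|a i|` is at most
`abcRadius a / 2 - 1` and `abcRadius a` is at least `2`. -/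
noncomputable def abcRadius (a : ι → ℤ) : ℝ := 2 + 2 * ∑ i, |(a i : ℝ)|

theorem two_le_abcRadius (a : ι → ℤ) : 2 ≤ abcRadius a := by
  have : 0 ≤ ∑ i, |(a i : ℝ)| := Finset.sum_nonneg fun i _ ↦ abs_nonneg _
  rw [abcRadius]
  linarith

theorem abs_le_half_abcRadius_sub_one (a : ι → ℤ) (i : ι) : |(a i : ℝ)| ≤ abcRadius a / 2 - 1 := by
  have := Finset.single_le_sum (fun j _ ↦ abs_nonneg (a j : ℝ)) (Finset.mem_univ i)
  rw [abcRadius]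
  linarith

theorem abcRadius_pow_le (hb : abcRadius a ^ (2 * Fintype.card ι + 2) ≤ |(b : ℝ)|) {m : ℕ}
    (hm : m ≤ 2 * Fintype.card ι + 2) : abcRadius a ^ m ≤ |(b : ℝ)| :=
  (pow_le_pow_right₀ (by linarith [two_le_abcRadius a]) hm).trans hb

theorem abcRadius_le_abs (hb : abcRadius a ^ (2 * Fintype.card ι + 2) ≤ |(b : ℝ)|) :
    abcRadius a ≤ |(b : ℝ)| := by
  simpa using abcRadius_pow_le hb (m := 1) (by omega)

theorem mul_log_abcRadius_le_log (hb : abcRadius a ^ (2 * Fintype.card ι + 2) ≤ |(b : ℝ)|) :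
    (2 * Fintype.card ι + 2) * Real.log (abcRadius a) ≤ Real.log b := by
  have hR := two_le_abcRadius a
  have hlog := Real.log_le_log (by positivity) hb
  rw [Real.log_pow, Real.log_abs] at hlog
  exact_mod_cast hlog

theorem two_pow_card_le_abs_sub (hb : abcRadius a ^ (2 * Fintype.card ι + 2) ≤ |(b : ℝ)|) (i : ι) :
    2 ^ Fintype.card (Option ι) ≤ |(b : ℝ) - a i| := by
  have hR := two_le_abcRadius a
  have hpow : (2 : ℝ) ^ (Fintype.card ι + 1) ≤ abcRadius a ^ (Fintype.card ι + 1) := by gcongr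
  have hle : abcRadius a ^ (Fintype.card ι + 2) ≤ |(b : ℝ)| := abcRadius_pow_le hb (by omega)
  have hle1 : abcRadius a ≤ abcRadius a ^ (Fintype.card ι + 1) :=
    le_self_pow₀ (by linarith) (Nat.succ_ne_zero _)
  rw [pow_succ] at hle
  rw [Fintype.card_option]
  have := abs_sub_abs_le_abs_sub (b : ℝ) (a i)
  have := abs_le_half_abcRadius_sub_one a i
  nlinarith

theorem exists_injective_real_roots [Nonempty ι] (ha : a.Injective)
    (hb : abcRadius a ^ (2 * Fintype.card ι + 2) ≤ |(b : ℝ)|) :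
    ∃ r : Option ι → ℝ, r.Injective ∧ (∀ i, |r (some i) - a i| ≤ 1 / 2) ∧
      |r none - b| ≤ 1 / 2 ∧ ∀ o, (∏ i, (r o - a i)) * (r o - b) = 1 := by
  set c : Option ι → ℤ := fun o ↦ o.elim b a
  have hne (i : ι) : b ≠ a i := fun h ↦ by
    have := two_pow_card_le_abs_sub hb i
    rw [h, sub_self, abs_zero] at this
    exact absurd this (by simp)
  have hc : c.Injective := by
    rintro (_ | i) (_ | j) hij
    · rfl
    · exact absurd hij (hne j)
    · exact absurd hij.symm (hne i)
    · exact congrArg some (ha hij)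
  have hfar (o : Option ι) : ∃ o', 2 ^ Fintype.card (Option ι) ≤ |(c o : ℝ) - c o'| := by
    obtain ⟨k⟩ := ‹Nonempty ι›
    rcases o with _ | i
    · exact ⟨some k, two_pow_card_le_abs_sub hb k⟩
    · exact ⟨none, (two_pow_card_le_abs_sub hb i).trans_eq (abs_sub_comm _ _)⟩
  choose o' ho' using hfar
  choose r hr hprod using fun o ↦ exists_prod_sub_eq_one hc (ho' o)
  refine ⟨r, fun o₁ o₂ h ↦ ?_, fun i ↦ (hr (some i)).le, (hr none).le, fun o ↦ ?_⟩
  · by_contra hne'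
    have := half_le_abs_sub_intCast (hr o₁).le (hc.ne (Ne.symm hne'))
    rw [h] at this
    exact this.not_gt (hr o₂)
  · rw [mul_comm, ← hprod o, Fintype.prod_option]
    rfl

section Logarithms

variable {x : ℝ} {k : ι}

theorem abs_log_sub_le_log_abcRadius (ha : a.Injective) (hx : |x - a k| ≤ 1 / 2) {i : ι}
    (hik : i ≠ k) : |Real.log (x - a i)| ≤ Real.log (abcRadius a) := by
  have hR := two_le_abcRadius a
  apply abs_log_le_log_of_inv_le_abs (by linarith)
  · calc (abcRadius a)⁻¹ ≤ 2⁻¹ := by gcongr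
      _ = 1 / 2 := by norm_num
      _ ≤ |x - a i| := half_le_abs_sub_intCast hx (ha.ne hik)
  · have htri := abs_sub_le x (a k) (a i)
    have htri' := abs_sub (a k : ℝ) (a i)
    linarith [abs_le_half_abcRadius_sub_one a i, abs_le_half_abcRadius_sub_one a k]

theorem sum_erase_abs_log_sub_le [DecidableEq ι] (ha : a.Injective) (hx : |x - a k| ≤ 1 / 2) :
    ∑ i ∈ Finset.univ.erase k, |Real.log (x - a i)| ≤
      (Fintype.card ι - 1) * Real.log (abcRadius a) := by
  have hcard : ((Finset.univ.erase k).card : ℝ) = Fintype.card ι - 1 :=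
    Finset.cast_card_erase_of_mem (Finset.mem_univ k)
  rw [← hcard, ← nsmul_eq_mul]
  exact Finset.sum_le_card_nsmul _ _ _ fun i hi ↦
    abs_log_sub_le_log_abcRadius ha hx (Finset.ne_of_mem_erase hi)

theorem log_sub_add_sum_erase_add_log_sub_eq_zero [DecidableEq ι]
    (hprod : (∏ i, (x - a i)) * (x - b) = 1) :
    Real.log (x - a k) + ∑ i ∈ Finset.univ.erase k, Real.log (x - a i) + Real.log (x - b) = 0 := by
  obtain ⟨hne, hneb⟩ := mul_ne_zero_iff.mp (hprod.trans_ne one_ne_zero)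
  rw [Finset.add_sum_erase _ (fun i ↦ Real.log (x - a i)) (Finset.mem_univ k),
    ← Real.log_prod (Finset.prod_ne_zero_iff.mp hne), ← Real.log_mul hne hneb, hprod, Real.log_one]

theorem abs_log_sub_add_log_le (ha : a.Injective) (hb : abcRadius a ≤ |(b : ℝ)|)
    (hx : |x - a k| ≤ 1 / 2) (hprod : (∏ i, (x - a i)) * (x - b) = 1) :
    |Real.log (x - a k) + Real.log b| ≤ Fintype.card ι * Real.log (abcRadius a) := by
  classical
  have hR := two_le_abcRadius a
  have hxb : |Real.log (x - b) - Real.log b| ≤ Real.log (abcRadius a) := by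
    rw [← Real.log_neg_eq_log (b : ℝ)]
    refine (abs_log_sub_log_le_log_two (neg_ne_zero.mpr ?_) ?_).trans
      (Real.log_le_log two_pos hR)
    · exact abs_pos.mp (by linarith)
    · rw [sub_neg_eq_add, sub_add_cancel, abs_neg]
      linarith [abs_sub_abs_le_abs_sub x (a k), abs_le_half_abcRadius_sub_one a k]
  have hsum := log_sub_add_sum_erase_add_log_sub_eq_zero (k := k) hprod
  calc |Real.log (x - a k) + Real.log b|
      = |∑ i ∈ Finset.univ.erase k, Real.log (x - a i) + (Real.log (x - b) - Real.log b)| := by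
        rw [← abs_neg]
        congr 1
        linarith
    _ ≤ ∑ i ∈ Finset.univ.erase k, |Real.log (x - a i)| + |Real.log (x - b) - Real.log b| :=
        (abs_add_le _ _).trans (by gcongr; exact Finset.abs_sum_le_sum_abs _ _)
    _ ≤ (Fintype.card ι - 1) * Real.log (abcRadius a) + Real.log (abcRadius a) :=
        add_le_add (sum_erase_abs_log_sub_le ha hx) hxb
    _ = Fintype.card ι * Real.log (abcRadius a) := by ring

theorem sum_erase_abs_log_sub_lt [DecidableEq ι] (ha : a.Injective)
    (hb : abcRadius a ^ (2 * Fintype.card ι + 2) ≤ |(b : ℝ)|) (hx : |x - a k| ≤ 1 / 2)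
    (hprod : (∏ i, (x - a i)) * (x - b) = 1) :
    ∑ i ∈ Finset.univ.erase k, |Real.log (x - a i)| < |Real.log (x - a k)| := by
  have hlog : 0 < Real.log (abcRadius a) := Real.log_pos (by linarith [two_le_abcRadius a])
  have hdiag := abs_log_sub_add_log_le ha (abcRadius_le_abs hb) hx hprod
  have hlogb := mul_log_abcRadius_le_log hb
  have hlower : Real.log b - |Real.log (x - a k)| ≤ |Real.log (x - a k) + Real.log b| := by
    linarith [neg_abs_le (Real.log (x - a k)), le_abs_self (Real.log (x - a k) + Real.log b)]
  linarith [sum_erase_abs_log_sub_le ha hx]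

theorem abs_log_sub_le_two_mul_log (ha : a.Injective)
    (hb : abcRadius a ^ (2 * Fintype.card ι + 2) ≤ |(b : ℝ)|) (hx : |x - a k| ≤ 1 / 2)
    (hprod : (∏ i, (x - a i)) * (x - b) = 1) (i : ι) :
    |Real.log (x - a i)| ≤ 2 * Real.log b := by
  have hlog : 0 < Real.log (abcRadius a) := Real.log_pos (by linarith [two_le_abcRadius a])
  have hlogb := mul_log_abcRadius_le_log hb
  have hcard : 0 ≤ Fintype.card ι * Real.log (abcRadius a) := by positivity
  rcases eq_or_ne i k with rfl | hik
  · have hdiag := abs_le.mp (abs_log_sub_add_log_le ha (abcRadius_le_abs hb) hx hprod)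
    exact abs_le.mpr ⟨by linarith, by linarith⟩
  · linarith [abs_log_sub_le_log_abcRadius ha hx hik]

theorem abs_log_sub_le_two_mul_log_of_abs_sub_le
    (hb : abcRadius a ^ (2 * Fintype.card ι + 2) ≤ |(b : ℝ)|) (hx : |x - b| ≤ 1 / 2) (i : ι) :
    |Real.log (x - a i)| ≤ 2 * Real.log b := by
  have hR := two_le_abcRadius a
  have hRb := abcRadius_le_abs hb
  have hdist : |Real.log (x - a i) - Real.log b| ≤ Real.log 2 := by
    refine abs_log_sub_log_le_log_two (abs_pos.mp (by linarith)) ?_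
    rw [sub_right_comm]
    linarith [abs_sub (x - b : ℝ) (a i), abs_le_half_abcRadius_sub_one a i]
  have hlog2 : Real.log 2 ≤ Real.log b := by
    rw [← Real.log_abs (b : ℝ)]
    exact Real.log_le_log two_pos (hR.trans hRb)
  obtain ⟨hlo, hhi⟩ := abs_le.mp hdist
  exact abs_le.mpr ⟨by linarith [Real.log_pos one_lt_two], by linarith⟩

theorem exists_real_roots_dominant_logs [Nonempty ι] [DecidableEq ι] (ha : a.Injective)
    (hb : abcRadius a ^ (2 * Fintype.card ι + 2) ≤ |(b : ℝ)|) :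
    ∃ r : Option ι → ℝ, r.Injective ∧ (∀ o, (∏ i, (r o - a i)) * (r o - b) = 1) ∧
      (∀ k, ∑ i ∈ Finset.univ.erase k, |Real.log (r (some k) - a i)| <
        |Real.log (r (some k) - a k)|) ∧
      ∀ o i, |Real.log (r o - a i)| ≤ 2 * Real.log b := by
  obtain ⟨r, hinj, hsome, hnone, hprod⟩ := exists_injective_real_roots ha hb
  refine ⟨r, hinj, hprod, fun k ↦ sum_erase_abs_log_sub_lt ha hb (hsome k) (hprod _), ?_⟩
  rintro (_ | k) i
  · exact abs_log_sub_le_two_mul_log_of_abs_sub_le hb hnone i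
  · exact abs_log_sub_le_two_mul_log ha hb (hsome k) (hprod _) i

end Logarithms

end LogEstimates

section RealPlaces

variable {K : Type*} [Field K]

/-- The infinite place `x ↦ |σ x|` of a real embedding `σ`. -/
noncomputable def realPlace (σ : K →+* ℝ) : InfinitePlace K := .mk (Complex.ofRealHom.comp σ)

theorem realPlace_apply (σ : K →+* ℝ) (x : K) : realPlace σ x = |σ x| := by
  rw [realPlace, InfinitePlace.apply, RingHom.comp_apply, Complex.ofRealHom_eq_coe,
    Complex.norm_real, Real.norm_eq_abs]

theorem realPlace_injective : (realPlace : (K →+* ℝ) → InfinitePlace K).Injective := by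
  intro σ τ h
  have hconj : ComplexEmbedding.conjugate (Complex.ofRealHom.comp σ) = Complex.ofRealHom.comp σ :=
    RingHom.ext fun x ↦ Complex.conj_ofReal (σ x)
  rw [realPlace, realPlace, InfinitePlace.mk_eq_iff, hconj, or_self] at h
  exact RingHom.ext fun x ↦ Complex.ofReal_injective (RingHom.congr_fun h x)

variable [NumberField K] {J : Type*} [Fintype J] {σ : J → K →+* ℝ}

theorem isTotallyReal_of_injective (hσ : σ.Injective) (hJ : finrank ℚ K = Fintype.card J) :
    IsTotallyReal K := by
  have hle := Fintype.card_le_of_injective _ (realPlace_injective.comp hσ)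
  rw [InfinitePlace.card_eq_nrRealPlaces_add_nrComplexPlaces, ← hJ,
    ← InfinitePlace.card_add_two_mul_card_eq_rank] at hle
  exact nrComplexPlaces_eq_zero_iff.mp (by omega)

theorem bijective_realPlace_comp [IsTotallyReal K] (hσ : σ.Injective)
    (hJ : finrank ℚ K = Fintype.card J) : (fun j ↦ realPlace (σ j)).Bijective :=
  (Fintype.bijective_iff_injective_and_card _).mpr
    ⟨realPlace_injective.comp hσ, hJ.symm.trans finrank_eq_card_infinitePlace⟩

theorem unitLog_realPlace [IsTotallyReal K] (τ : K →+* ℝ) (η : (𝓞 K)ˣ) :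
    unitLog K (.ofMul η) (realPlace τ) = Real.log (τ (η : K)) := by
  rw [unitLog_apply, IsTotallyReal.mult_eq, Nat.cast_one, one_mul, realPlace_apply, Real.log_abs]

theorem index_closure_le_of_real_embeddings {ι : Type*} [Fintype ι] [DecidableEq ι] [Nonempty ι]
    {σ : Option ι → K →+* ℝ} (hσ : σ.Injective) (hrank : finrank ℚ K = Fintype.card ι + 1)
    (hprim : ∀ F : IntermediateField ℚ K, F = ⊥ ∨ F = ⊤) {u : ι → (𝓞 K)ˣ}
    (hdom : ∀ k, ∑ i ∈ Finset.univ.erase k, |Real.log (σ (some k) (u i : K))| <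
      |Real.log (σ (some k) (u k : K))|)
    {S : ℝ} (hS : ∀ o i, |Real.log (σ o (u i : K))| ≤ S) :
    (Subgroup.closure ({-1} ∪ Set.range u)).index ≠ 0 ∧
      ((Subgroup.closure ({-1} ∪ Set.range u)).index : ℝ) ≤
        (3 * (finrank ℚ K : ℝ) ^ 3 * (S / Real.log |(discr K : ℝ)|)) ^ Fintype.card ι := by
  rw [← Fintype.card_option] at hrank
  have := isTotallyReal_of_injective hσ hrank
  have hbij := bijective_realPlace_comp hσ hrank
  refine index_closure_neg_one_union_range_le hprim (Equiv.ofBijective _ hbij) ?_ fun i ↦ ?_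
  · simpa only [Equiv.ofBijective_apply, unitLog_realPlace] using hdom
  · have hS0 : 0 ≤ S := (abs_nonneg _).trans (hS none i)
    refine (pi_norm_le_iff_of_nonneg hS0).mpr (hbij.surjective.forall.mpr fun o ↦ ?_)
    rw [unitLog_realPlace]
    exact hS o i

end RealPlaces

theorem exists_units_eq_sub_intCast {K ι : Type*} [Field K] [Fintype ι] {a : ι → ℤ} {b : ℤ} {ξ : K}
    (hξ : IsIntegral ℤ ξ) (hprod : (∏ i, (ξ - a i)) * (ξ - b) = 1) :
    ∃ u : ι → (𝓞 K)ˣ, ∀ i, (u i : K) = ξ - a i := by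
  set x : 𝓞 K := ⟨ξ, hξ⟩
  have hx : (x : K) = ξ := rfl
  have hprod' : (∏ i, (x - a i)) * (x - b) = 1 := by
    apply RingOfIntegers.coe_injective
    simpa [map_prod, hx] using hprod
  have hunit (i : ι) : IsUnit (x - a i) := isUnit_of_dvd_one <| hprod' ▸
    (Finset.dvd_prod_of_mem _ (Finset.mem_univ i)).mul_right _
  refine ⟨fun i ↦ (hunit i).unit, fun i ↦ ?_⟩
  simp [hx]

section AbcPolynomial

variable {n : ℕ} (a : Fin (n - 1) → ℤ) (b : ℤ)

theorem monic_prod_X_sub_C_mul : ((∏ i, (X - C (a i))) * (X - C b)).Monic :=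
  (monic_prod_of_monic _ _ fun _ _ ↦ monic_X_sub_C _).mul (monic_X_sub_C _)

theorem natDegree_prod_X_sub_C_mul (hn : 1 ≤ n) :
    ((∏ i, (X - C (a i))) * (X - C b)).natDegree = n := by
  rw [(monic_prod_of_monic _ _ fun _ _ ↦ monic_X_sub_C _).natDegree_mul (monic_X_sub_C _),
    natDegree_prod_of_monic _ _ fun _ _ ↦ monic_X_sub_C _]
  simp only [natDegree_X_sub_C, Finset.sum_const, Finset.card_univ, Fintype.card_fin, smul_eq_mul,
    mul_one]
  exact Nat.sub_add_cancel hn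

theorem degree_one_lt_degree_prod_X_sub_C_mul (hn : 1 ≤ n) :
    (1 : ℤ[X]).degree < ((∏ i, (X - C (a i))) * (X - C b)).degree :=
  degree_lt_degree (by rw [natDegree_one, natDegree_prod_X_sub_C_mul a b hn]; exact hn)

theorem monic_abcPolyZ (hn : 1 ≤ n) : (abcPolyZ n a b).Monic :=
  (monic_prod_X_sub_C_mul a b).sub_of_left (degree_one_lt_degree_prod_X_sub_C_mul a b hn)

theorem natDegree_abcPolyQ (hn : 1 ≤ n) : (abcPolyQ n a b).natDegree = n := by
  rw [abcPolyQ, (monic_abcPolyZ a b hn).natDegree_map, abcPolyZ,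
    natDegree_eq_of_degree_eq (degree_sub_eq_left_of_degree_lt
      (degree_one_lt_degree_prod_X_sub_C_mul a b hn)), natDegree_prod_X_sub_C_mul a b hn]

theorem eval₂_abcPolyZ {R : Type*} [CommRing R] (φ : ℤ →+* R) (x : R) :
    (abcPolyZ n a b).eval₂ φ x = (∏ i, (x - (a i : R))) * (x - b) - 1 := by
  simp only [abcPolyZ, eval₂_sub, eval₂_mul, eval₂_finsetProd, eval₂_X, eval₂_C, eval₂_one]
  simp only [eq_intCast]

theorem eval₂_abcPolyQ {R : Type*} [CommRing R] (φ : ℚ →+* R) (x : R) :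
    (abcPolyQ n a b).eval₂ φ x = (∏ i, (x - (a i : R))) * (x - b) - 1 := by
  rw [abcPolyQ, eval₂_map, eval₂_abcPolyZ]

theorem prod_root_sub_mul_eq_one :
    (∏ i, (AdjoinRoot.root (abcPolyQ n a b) - a i)) * (AdjoinRoot.root (abcPolyQ n a b) - b) =
      1 := by
  rw [← sub_eq_zero, ← eval₂_abcPolyQ a b (AdjoinRoot.of _), AdjoinRoot.eval₂_root]

theorem isIntegral_root_abcPolyQ (hn : 1 ≤ n) :
    IsIntegral ℤ (AdjoinRoot.root (abcPolyQ n a b)) :=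
  ⟨abcPolyZ n a b, monic_abcPolyZ a b hn, by
    rw [eval₂_abcPolyZ, prod_root_sub_mul_eq_one, sub_self]⟩

theorem finrank_adjoinRoot_abcPolyQ (hn : 1 ≤ n) [Fact (Irreducible (abcPolyQ n a b))] :
    finrank ℚ (AdjoinRoot (abcPolyQ n a b)) = n := by
  rw [(AdjoinRoot.powerBasis (Fact.out : Irreducible (abcPolyQ n a b)).ne_zero).finrank,
    AdjoinRoot.powerBasis_dim, natDegree_abcPolyQ a b hn]

theorem exists_real_embeddings_dominant_logs {a : Fin (n - 1) → ℤ} {b : ℤ} (hn : 2 ≤ n)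
    (ha : a.Injective) (hb : abcRadius a ^ (2 * n) ≤ |(b : ℝ)|) :
    ∃ σ : Option (Fin (n - 1)) → AdjoinRoot (abcPolyQ n a b) →+* ℝ, σ.Injective ∧
      (∀ k, ∑ i ∈ Finset.univ.erase k,
          |Real.log (σ (some k) (AdjoinRoot.root (abcPolyQ n a b) - a i))| <
        |Real.log (σ (some k) (AdjoinRoot.root (abcPolyQ n a b) - a k))|) ∧
      ∀ o i, |Real.log (σ o (AdjoinRoot.root (abcPolyQ n a b) - a i))| ≤ 2 * Real.log b := by
  have : Nonempty (Fin (n - 1)) := ⟨⟨0, by omega⟩⟩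
  have hexp : 2 * Fintype.card (Fin (n - 1)) + 2 = 2 * n := by
    rw [Fintype.card_fin]
    omega
  obtain ⟨r, hr, hprod, hdom, hS⟩ := exists_real_roots_dominant_logs ha (hexp ▸ hb)
  let σ (o : Option (Fin (n - 1))) : AdjoinRoot (abcPolyQ n a b) →+* ℝ :=
    AdjoinRoot.lift (algebraMap ℚ ℝ) (r o) (by rw [eval₂_abcPolyQ, hprod, sub_self])
  have hσroot (o) : σ o (AdjoinRoot.root _) = r o := AdjoinRoot.lift_root _
  have hσ : σ.Injective := fun o₁ o₂ h ↦ hr (by rw [← hσroot, ← hσroot, h])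
  refine ⟨σ, hσ, ?_⟩
  simpa only [map_sub, hσroot, map_intCast] using And.intro hdom hS

end AbcPolynomial

theorem pow_log_div_log_le {x D κ c : ℝ} (hx : 1 < |x|) (hκ : 0 < κ) (hD : |x| ^ κ ≤ D)
    (hc : 0 ≤ c) (m : ℕ) :
    (c * (Real.log x / Real.log D)) ^ m ≤ c ^ m * κ ^ (-(m : ℝ)) := by
  have hx0 : 0 < |x| := one_pos.trans hx
  have hlogx : 0 < Real.log x := Real.log_abs x ▸ Real.log_pos hx
  have hlog : κ * Real.log x ≤ Real.log D := by
    rw [← Real.log_abs x, ← Real.log_rpow hx0]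
    exact Real.log_le_log (Real.rpow_pos_of_pos hx0 κ) hD
  have hlogD : 0 < Real.log D := (mul_pos hκ hlogx).trans_le hlog
  have hratio : Real.log x / Real.log D ≤ κ⁻¹ := by
    rw [div_le_iff₀ hlogD, ← div_eq_inv_mul, le_div_iff₀' hκ]
    exact hlog
  calc (c * (Real.log x / Real.log D)) ^ m ≤ (c * κ⁻¹) ^ m := by gcongr
    _ = c ^ m * κ ^ (-(m : ℝ)) := by
      rw [mul_pow, inv_pow, Real.rpow_neg hκ.le, Real.rpow_natCast]

theorem abc_unit_index_bound_general (n : ℕ) (hn : 2 ≤ n) (a : Fin (n - 1) → ℤ)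
    (hinj : Function.Injective a) {κ : ℝ} (hκ : 0 < κ) {b : ℤ}
    (hb : abcRadius a ^ (2 * n) ≤ |(b : ℝ)|) [Fact (Irreducible (abcPolyQ n a b))]
    (hprim : ∀ F : IntermediateField ℚ (AdjoinRoot (abcPolyQ n a b)), F = ⊥ ∨ F = ⊤)
    (hD : |(b : ℝ)| ^ κ ≤ |(discr (AdjoinRoot (abcPolyQ n a b)) : ℝ)|) :
    ∃ u : Fin (n - 1) → (𝓞 (AdjoinRoot (abcPolyQ n a b)))ˣ,
      (∀ i, algebraMap (𝓞 (AdjoinRoot (abcPolyQ n a b))) (AdjoinRoot (abcPolyQ n a b)) (u i) =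
        AdjoinRoot.root (abcPolyQ n a b) - (a i : AdjoinRoot (abcPolyQ n a b))) ∧
      (Subgroup.closure ({-1} ∪ Set.range u)).index ≠ 0 ∧
      ((Subgroup.closure ({-1} ∪ Set.range u)).index : ℝ) ≤
        (6 * (n : ℝ) ^ 3) ^ (n - 1) * κ ^ ((1 : ℝ) - (n : ℝ)) := by
  have : Nonempty (Fin (n - 1)) := ⟨⟨0, by omega⟩⟩
  have hn1 : 1 ≤ n := by omega
  -- Here and for `hprim`, `convert` identifies the `ℚ`-algebra structure that `AdjoinRoot` carries
  -- as a field of characteristic zero with the one inherited from `ℚ[X]`.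
  have hrank : finrank ℚ (AdjoinRoot (abcPolyQ n a b)) = n := by
    convert finrank_adjoinRoot_abcPolyQ a b hn1
  obtain ⟨u, hu⟩ := exists_units_eq_sub_intCast (isIntegral_root_abcPolyQ a b hn1)
    (prod_root_sub_mul_eq_one a b)
  obtain ⟨σ, hσ, hdom, hS⟩ := exists_real_embeddings_dominant_logs hn hinj hb
  obtain ⟨hne, hle⟩ := index_closure_le_of_real_embeddings hσ
    (by rw [hrank, Fintype.card_fin, Nat.sub_add_cancel hn1]) (by convert hprim) (u := u)
    (by simpa only [hu] using hdom) (by simpa only [hu] using hS)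
  have hb1 : 1 < |(b : ℝ)| :=
    (one_lt_pow₀ (by linarith [two_le_abcRadius a]) (by omega)).trans_le hb
  refine ⟨u, hu, hne, hle.trans ?_⟩
  have hsix : 3 * (n : ℝ) ^ 3 * 2 = 6 * (n : ℝ) ^ 3 := by ring
  rw [hrank, Fintype.card_fin, mul_div_assoc, ← mul_assoc, hsix, ← neg_sub (n : ℝ) 1,
    ← Nat.cast_pred hn1]
  exact pow_log_div_log_le hb1 hκ hD (by positivity) (n - 1)

/-- **Proposition 4.1(4).**  There are `A₀, C > 0` (depending only on `n` and the `a_k`)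
such that if `|a| ≥ A₀`, the field `K_a` is primitive (has no subfield other than `ℚ`
and itself), and `|disc K_a| ≥ |a|^κ` for some `κ > 0`, then the subgroup of the unit
group of the ring of integers of `K_a` generated by `−1` and the ABC-units
`ξ−a_1, …, ξ−a_{n-1}` has finite index at most `C·κ^{1-n}`. -/
theorem abc_unit_index_bound (n : ℕ) (hn : 3 ≤ n)
    (a : Fin (n - 1) → ℤ) (hinj : Function.Injective a) :
    ∃ A₀ C : ℝ, 0 < A₀ ∧ 0 < C ∧
      ∀ (κ : ℝ), 0 < κ →
        ∀ b : ℤ, (∀ i, b ≠ a i) → A₀ ≤ |(b : ℝ)| →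
          ∀ [Fact (Irreducible (abcPolyQ n a b))],
            (∀ F : IntermediateField ℚ (AdjoinRoot (abcPolyQ n a b)), F = ⊥ ∨ F = ⊤) →
            |(b : ℝ)| ^ κ ≤ |(NumberField.discr (AdjoinRoot (abcPolyQ n a b)) : ℝ)| →
            ∃ u : Fin (n - 1) → (𝓞 (AdjoinRoot (abcPolyQ n a b)))ˣ,
              (∀ i, algebraMap (𝓞 (AdjoinRoot (abcPolyQ n a b)))
                  (AdjoinRoot (abcPolyQ n a b)) (u i) =
                AdjoinRoot.root (abcPolyQ n a b) -
                  (a i : AdjoinRoot (abcPolyQ n a b))) ∧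
              (Subgroup.closure ({-1} ∪ Set.range u)).index ≠ 0 ∧
              ((Subgroup.closure ({-1} ∪ Set.range u)).index : ℝ) ≤
                C * κ ^ ((1 : ℝ) - (n : ℝ)) := by
  have hR : 0 < abcRadius a := by linarith [two_le_abcRadius a]
  exact ⟨abcRadius a ^ (2 * n), (6 * (n : ℝ) ^ 3) ^ (n - 1), by positivity, by positivity,
    fun κ hκ b _ hb _ hprim hD ↦
      abc_unit_index_bound_general n (by omega) a hinj hκ hb hprim hD⟩
end

section
/- Let n ≥ 3 and ℓ ≥ 1 be integers. There exist pairwise distinct nonzero integers a_1,…,a_{n-1} such that the polynomial f(t,x) = (x−a_1)⋯(x−a_{n-1})·(x − (−1)^{n-1}(t^ℓ−1)/(a_1⋯a_{n-1})) − 1, viewed as a polynomial in x over the rational function field ℚ(t), is separable with Galois group isomorphic to the symmetric group S_n, and the specialized polynomial f(0,x) ∈ ℚ[x] is separable. -/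
open Polynomial

/-- The main polynomial
`f(t,x) = (x−a_1)⋯(x−a_{n-1})·(x − (−1)^{n-1}(t^ℓ−1)/(a_1⋯a_{n-1})) − 1`,
viewed as a polynomial in `x` over the rational function field `ℚ(t)`. -/
noncomputable def mainPoly (n ℓ : ℕ) (a : Fin (n - 1) → ℤ) : Polynomial (RatFunc ℚ) :=
  (∏ i, (X - C ((a i : ℤ) : RatFunc ℚ))) *
    (X - C ((-1) ^ (n - 1) * (RatFunc.X ^ ℓ - 1) / (((∏ i, a i : ℤ) : RatFunc ℚ)))) - 1

/-- The specialization `f(0,x) ∈ ℚ[x]` of the main polynomial at `t = 0`. -/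
noncomputable def mainPolyZero (n ℓ : ℕ) (a : Fin (n - 1) → ℤ) : Polynomial ℚ :=
  (∏ i, (X - C ((a i : ℤ) : ℚ))) *
    (X - C ((-1) ^ (n - 1) * ((0 : ℚ) ^ ℓ - 1) / (((∏ i, a i : ℤ) : ℚ)))) - 1

/-!
The `a i` are chosen by congruences modulo `p ^ 2` and modulo `q`, for two primes `p` and `q`. The
first ones make `f(0, x)` equal to `x` times a `p`-Eisenstein polynomial. By Hensel's lemma this
lifts to a factorization of `f` over `ℚ((t))` into a linear and an irreducible factor, so the
stabilizer of one root acts transitively on the others; as `f` has no root in `ℚ(t)`, the Galois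
group is 2-transitive. For a transposition, embed `ℚ(t)` into `ℚ_q` so that
`c = (-1)^(n-1) (t^ℓ - 1) / ∏ a i` has norm `q`, where `a₁ ≡ a₂ ≡ 0` are the only `a i` that agree
modulo `q`. Then `f` has a root near `c` and one near each other `a i`, but it does not split: a
root near `a₁` would make the product of the `x - a i` too small. A 2-transitive group containing a
transposition is the full symmetric group.
-/

section MulAction

open MulAction

variable {G α : Type*} [Group G] [MulAction G α]

theorem isMultiplyPretransitive_two_of_stabilizer {x : α} (hmove : ∃ g : G, g • x ≠ x)
    (hstab : ∀ y z, y ≠ x → z ≠ x → ∃ g ∈ stabilizer G x, g • y = z) :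
    IsMultiplyPretransitive G α 2 := by
  obtain ⟨τ, hτ⟩ := hmove
  have htrans (y : α) : ∃ g : G, g • y = x := by
    by_cases hy : y = x
    · exact ⟨1, by rw [one_smul, hy]⟩
    · obtain ⟨g, -, hg⟩ := hstab y (τ • x) hy hτ
      exact ⟨τ⁻¹ * g, by rw [mul_smul, hg, inv_smul_smul]⟩
  rw [is_two_pretransitive_iff]
  intro a b c d hab hcd
  obtain ⟨u, rfl⟩ := htrans a
  obtain ⟨v, hv⟩ := htrans c
  obtain ⟨g, hg, hgb⟩ := hstab (u • b) (v • d) ((MulAction.injective u).ne hab.symm)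
    (hv ▸ (MulAction.injective v).ne hcd.symm)
  refine ⟨v⁻¹ * g * u, ?_, ?_⟩
  · rw [mul_smul, mul_smul, mem_stabilizer_iff.1 hg, ← hv, inv_smul_smul]
  · rw [mul_smul, mul_smul, hgb, inv_smul_smul]

theorem toPermHom_surjective_of_isSwap [Finite α] [DecidableEq α]
    (htrans : IsMultiplyPretransitive G α 2) {g : G} (hg : (toPermHom G α g).IsSwap) :
    Function.Surjective (toPermHom G α) := by
  have := isPreprimitive_of_is_two_pretransitive htrans
  have hprim : IsPreprimitive (toPermHom G α).range α :=
    .of_surjective (f := (⟨id, fun _ _ => rfl⟩ : α →ₑ[(toPermHom G α).rangeRestrict] α))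
      Function.surjective_id
  exact MonoidHom.range_eq_top.1
    (Equiv.Perm.subgroup_eq_top_of_isPreprimitive_of_isSwap_mem hprim _ hg ⟨g, rfl⟩)

end MulAction

section Gal

variable {K : Type*} [Field K] {f : K[X]}

theorem exists_gal_smul_ne (hsep : f.Separable) (x : f.rootSet f.SplittingField)
    (hroot : ∀ r : K, ¬ f.IsRoot r) : ∃ g : f.Gal, g • x ≠ x := by
  have : IsGalois K f.SplittingField := .of_separable_splitting_field hsep
  by_contra! hfix
  obtain ⟨r, hr⟩ : (x : f.SplittingField) ∈ (⊥ : IntermediateField K f.SplittingField) :=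
    (IsGalois.mem_bot_iff_fixed _).2 fun g => congrArg Subtype.val (hfix g)
  have hx : aeval (algebraMap K f.SplittingField r) f = 0 := hr ▸ aeval_eq_zero_of_mem_rootSet x.2
  exact hroot r (by simpa [aeval_algebraMap_apply] using hx)

section Extension

variable {L : Type*} [Field L] [Algebra K L]

instance fact_splits_map_algebraicClosure :
    Fact (f.map (algebraMap K (AlgebraicClosure L))).Splits :=
  ⟨IsAlgClosed.splits _⟩

theorem exists_gal_smul_eq_algEquiv_apply (σ : Gal(AlgebraicClosure L/L)) :
    ∃ g : f.Gal, ∀ x : f.rootSet f.SplittingField,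
      (Gal.rootsEquivRoots f (AlgebraicClosure L) (g • x) : AlgebraicClosure L) =
        σ (Gal.rootsEquivRoots f (AlgebraicClosure L) x) := by
  refine ⟨Gal.restrict f (AlgebraicClosure L) (σ.restrictScalars K), fun x => ?_⟩
  have hsmul := Gal.restrict_smul (p := f) (σ.restrictScalars K)
    (Gal.rootsEquivRoots f (AlgebraicClosure L) x)
  rw [Gal.smul_def, Equiv.symm_apply_apply] at hsmul
  exact hsmul

theorem exists_gal_stabilizer_transitive_of_map_eq (hf : f ≠ 0) {θ : L} {g : L[X]}
    (hfac : f.map (algebraMap K L) = (X - C θ) * g) (hg : Irreducible g) :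
    ∃ x : f.rootSet f.SplittingField, ∀ y z, y ≠ x → z ≠ x →
      ∃ σ ∈ MulAction.stabilizer f.Gal x, σ • y = z := by
  let e := Gal.rootsEquivRoots f (AlgebraicClosure L)
  have haeval (y : AlgebraicClosure L) :
      aeval y f = (y - algebraMap L (AlgebraicClosure L) θ) * aeval y g := by
    rw [← aeval_map_algebraMap L, hfac]
    simp
  have hθ : algebraMap L (AlgebraicClosure L) θ ∈ f.rootSet (AlgebraicClosure L) :=
    mem_rootSet.2 ⟨hf, by rw [haeval, sub_self, zero_mul]⟩
  have hminpoly {y} (hy : y ≠ e.symm ⟨_, hθ⟩) :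
      g * C g.leadingCoeff⁻¹ = minpoly L (e y : AlgebraicClosure L) := by
    refine minpoly.eq_of_irreducible hg ?_
    have hy0 := aeval_eq_zero_of_mem_rootSet (e y).2
    rw [haeval, mul_eq_zero, sub_eq_zero] at hy0
    exact hy0.resolve_left fun h => hy (e.eq_symm_apply.2 (Subtype.ext h))
  refine ⟨e.symm ⟨_, hθ⟩, fun y z hy hz => ?_⟩
  have hconj : IsConjRoot L (e z : AlgebraicClosure L) (e y : AlgebraicClosure L) :=
    (hminpoly hz).symm.trans (hminpoly hy)
  obtain ⟨τ, hτ⟩ := isConjRoot_iff_exists_algEquiv.1 hconj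
  obtain ⟨σ, hσ⟩ := exists_gal_smul_eq_algEquiv_apply (f := f) τ
  exact ⟨σ, e.injective (Subtype.ext ((hσ _).trans (by simp [e]))),
    e.injective (Subtype.ext ((hσ y).trans hτ))⟩

theorem exists_algEquiv_apply_ne_of_not_splits (hsep : f.Separable)
    (hns : ¬ (f.map (algebraMap K L)).Splits) :
    ∃ y ∈ f.rootSet (AlgebraicClosure L), ∃ σ : Gal(AlgebraicClosure L/L), σ y ≠ y := by
  obtain ⟨y, hy, hyL⟩ : ∃ y ∈ f.rootSet (AlgebraicClosure L),
      y ∉ (algebraMap L (AlgebraicClosure L)).range := by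
    by_contra! hcon
    refine hns (.of_splits_map_of_injective (algebraMap L (AlgebraicClosure L)).injective
      (IsAlgClosed.splits _) fun y hy => hcon y ?_)
    rw [Polynomial.map_map, ← IsScalarTower.algebraMap_eq] at hy
    exact mem_rootSet.2 ⟨hsep.ne_zero, by simpa using (mem_roots'.1 hy).2⟩
  have hysep : IsSeparable L y := by
    refine (hsep.map (f := algebraMap K L)).of_dvd (minpoly.dvd L y ?_)
    rw [aeval_map_algebraMap, aeval_eq_zero_of_mem_rootSet hy]
  obtain ⟨z, hyz, hconj⟩ := (notMem_iff_exists_ne_and_isConjRoot hysep (IsAlgClosed.splits _)).1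
    (fun h => hyL (Algebra.mem_bot.1 h))
  obtain ⟨σ, hσ⟩ := isConjRoot_iff_exists_algEquiv.1 hconj.symm
  exact ⟨y, hy, σ, hσ ▸ hyz.symm⟩

open Classical in
theorem exists_gal_isSwap_of_roots_of_not_splits (hsep : f.Separable) {s : Finset L}
    (hs : ∀ x ∈ s, aeval x f = 0) (hcard : f.natDegree ≤ s.card + 2)
    (hns : ¬ (f.map (algebraMap K L)).Splits) :
    ∃ g : f.Gal, (MulAction.toPermHom f.Gal (f.rootSet f.SplittingField) g).IsSwap := by
  let e := Gal.rootsEquivRoots f (AlgebraicClosure L)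
  obtain ⟨y, hy, σ, hσ⟩ := exists_algEquiv_apply_ne_of_not_splits hsep hns
  obtain ⟨g, hg⟩ := exists_gal_smul_eq_algEquiv_apply (f := f) σ
  set π := MulAction.toPermHom f.Gal (f.rootSet f.SplittingField) g
  let ι : s → f.rootSet f.SplittingField := fun x =>
    e.symm ⟨algebraMap L (AlgebraicClosure L) x, mem_rootSet.2
      ⟨hsep.ne_zero, by rw [aeval_algebraMap_apply, hs x x.2, map_zero]⟩⟩
  have hι : Function.Injective ι := fun x x' h =>
    Subtype.ext ((algebraMap L _).injective (congrArg Subtype.val (e.symm.injective h)))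
  have hfix (x : s) : π (ι x) = ι x :=
    e.injective (Subtype.ext ((hg (ι x)).trans (by simp [ι, e])))
  have hsupport : π.support ⊆ (Finset.univ.image ι)ᶜ := by
    intro x hx
    simp only [Finset.mem_compl, Finset.mem_image, Finset.mem_univ, true_and]
    rintro ⟨x, rfl⟩
    exact Equiv.Perm.mem_support.1 hx (hfix x)
  refine ⟨g, Equiv.Perm.card_support_eq_two.1 (le_antisymm ?_ ?_)⟩
  · have := Finset.card_le_card hsupport
    rw [Finset.card_compl, card_rootSet_eq_natDegree hsep (SplittingField.splits f),
      Finset.card_image_of_injective _ hι, Finset.card_univ, Fintype.card_coe] at this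
    lia
  · refine Equiv.Perm.two_le_card_support_of_ne_one fun hπ => hσ ?_
    have hgy := hg (e.symm ⟨y, hy⟩)
    rw [show g • e.symm ⟨y, hy⟩ = e.symm ⟨y, hy⟩ from DFunLike.congr_fun hπ _] at hgy
    simpa [e] using hgy.symm

end Extension

open Classical in
theorem nonempty_gal_mulEquiv_perm_of_extensions {L L' : Type*} [Field L] [Algebra K L]
    [Field L'] [Algebra K L'] (hsep : f.Separable) (hroot : ∀ r : K, ¬ f.IsRoot r)
    {θ : L} {g : L[X]} (hfac : f.map (algebraMap K L) = (X - C θ) * g) (hg : Irreducible g)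
    {s : Finset L'} (hs : ∀ x ∈ s, aeval x f = 0) (hcard : f.natDegree ≤ s.card + 2)
    (hns : ¬ (f.map (algebraMap K L')).Splits) :
    Nonempty (f.Gal ≃* Equiv.Perm (Fin f.natDegree)) := by
  obtain ⟨x, hx⟩ := exists_gal_stabilizer_transitive_of_map_eq hsep.ne_zero hfac hg
  obtain ⟨σ, hσ⟩ := exists_gal_isSwap_of_roots_of_not_splits hsep hs hcard hns
  have hsurj := toPermHom_surjective_of_isSwap
    (isMultiplyPretransitive_two_of_stabilizer (exists_gal_smul_ne hsep x hroot) hx) hσ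
  have hinj : Function.Injective (MulAction.toPermHom f.Gal (f.rootSet f.SplittingField)) := by
    intro σ τ hστ
    refine Gal.ext f fun x hx => ?_
    exact congrArg Subtype.val (DFunLike.congr_fun hστ ⟨x, hx⟩)
  exact ⟨(MulEquiv.ofBijective _ ⟨hinj, hsurj⟩).trans (Equiv.permCongrHom
    (Fintype.equivFinOfCardEq (card_rootSet_eq_natDegree hsep (SplittingField.splits f))))⟩

end Gal

section Henselian

theorem exists_eq_X_sub_C_mul_of_map_eq {R κ : Type*} [CommRing R] [Field κ] {φ : R →+* κ}
    [HenselianRing R (RingHom.ker φ)] (hφ : Function.Surjective φ) {F : R[X]} (hF : F.Monic)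
    {α : κ} {g : κ[X]} (hfac : F.map φ = (X - C α) * g) (hα : ¬ g.IsRoot α) :
    ∃ (θ : R) (G : R[X]), F = (X - C θ) * G ∧ G.map φ = g := by
  obtain ⟨α, rfl⟩ := hφ α
  have hroot : F.eval α ∈ RingHom.ker φ := by
    rw [RingHom.mem_ker, ← eval_map_apply, hfac]
    simp
  have hsimple : IsUnit (Ideal.Quotient.mk (RingHom.ker φ) (F.derivative.eval α)) := by
    have hderiv : φ (F.derivative.eval α) ≠ 0 := by
      rw [← eval_map_apply, ← derivative_map, hfac]
      simpa [derivative_mul] using hα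
    rw [← MulEquiv.isUnit_map (RingHom.quotientKerEquivOfSurjective hφ)]
    exact isUnit_iff_ne_zero.2 hderiv
  obtain ⟨θ, hθ, hθα⟩ := HenselianRing.is_henselian F hF α hroot hsimple
  have hθα : φ θ = φ α := sub_eq_zero.1 (by rwa [← map_sub])
  obtain ⟨G, rfl⟩ := dvd_iff_isRoot.2 hθ
  refine ⟨θ, G, rfl, mul_left_cancel₀ (X_sub_C_ne_zero (φ α)) ?_⟩
  rw [← hfac, Polynomial.map_mul, Polynomial.map_sub, map_X, map_C, hθα]

open scoped LaurentSeries PowerSeries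

instance henselianRing_ker_constantCoeff {κ : Type*} [Field κ] :
    HenselianRing κ⟦X⟧ (RingHom.ker (PowerSeries.constantCoeff (R := κ))) := by
  rw [PowerSeries.ker_coeff_eq_max_ideal, PowerSeries.maximalIdeal_eq_span_X]
  infer_instance

theorem exists_map_laurentSeries_eq_X_sub_C_mul_irreducible {κ : Type*} [Field κ] {F : κ[X][X]}
    (hF : F.Monic) {α : κ} {g : κ[X]} (hfac : F.map (evalRingHom 0) = (X - C α) * g)
    (hα : ¬ g.IsRoot α) (hg : Irreducible g) :
    ∃ (θ : κ⸨X⸩) (G : κ⸨X⸩[X]), F.map (algebraMap κ[X] κ⸨X⸩) = (X - C θ) * G ∧ Irreducible G := by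
  have hfac' : (F.map coeToPowerSeries.ringHom).map PowerSeries.constantCoeff = (X - C α) * g := by
    rw [Polynomial.map_map, ← hfac]
    congr 1
    ext <;> simp
  obtain ⟨θ, G, hG, hGg⟩ := exists_eq_X_sub_C_mul_of_map_eq PowerSeries.constantCoeff_surj
    (hF.map _) hfac' hα
  have hGmonic : G.Monic := (monic_X_sub_C θ).of_mul_monic_left (hG ▸ hF.map _)
  refine ⟨algebraMap κ⟦X⟧ κ⸨X⸩ θ, G.map (algebraMap κ⟦X⟧ κ⸨X⸩), ?_,
    hGmonic.irreducible_iff_irreducible_map_fraction_map.1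
      (hGmonic.irreducible_of_irreducible_map PowerSeries.constantCoeff G (hGg ▸ hg))⟩
  have halg : algebraMap κ[X] κ⸨X⸩ = (algebraMap κ⟦X⟧ κ⸨X⸩).comp coeToPowerSeries.ringHom := by
    ext <;> simp
  rw [halg, ← Polynomial.map_map, hG, Polynomial.map_mul, Polynomial.map_sub, map_X, map_C]

end Henselian

theorem separable_of_eq_X_sub_C_mul {κ : Type*} [Field κ] [PerfectField κ] {f g : κ[X]} {α : κ}
    (hfac : f = (X - C α) * g) (hg : Irreducible g) (hdeg : f.natDegree ≠ 2) : f.Separable := by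
  have hgdeg : g.natDegree ≠ 1 := by
    rw [hfac, natDegree_mul (X_sub_C_ne_zero α) hg.ne_zero, natDegree_X_sub_C] at hdeg
    lia
  rw [hfac]
  exact separable_X_sub_C.mul (PerfectField.separable_of_irreducible hg) <|
    (irreducible_X_sub_C α).coprime_iff_not_dvd.2 <|
      mt dvd_iff_isRoot.1 (hg.not_isRoot_of_natDegree_ne_one hgdeg)

/-- `∏ i, (X - a i) * (X - c) - 1`, the shape shared by all specializations of `mainPoly`. The
root `c` is kept apart from the `a i` because it alone varies with the parameter `t`. -/
noncomputable def rootProdSubOne {ι R : Type*} [Fintype ι] [CommRing R] (a : ι → R) (c : R) :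
    R[X] :=
  (∏ i, (X - C (a i))) * (X - C c) - 1

section RootProdSubOne

variable {ι R : Type*} [Fintype ι] [CommRing R]

theorem map_rootProdSubOne {S : Type*} [CommRing S] (φ : R →+* S) (a : ι → R) (c : R) :
    (rootProdSubOne a c).map φ = rootProdSubOne (fun i => φ (a i)) (φ c) := by
  simp [rootProdSubOne, Polynomial.map_prod]

theorem isRoot_rootProdSubOne {a : ι → R} {c x : R} :
    (rootProdSubOne a c).IsRoot x ↔ (∏ i, (x - a i)) * (x - c) = 1 := by
  simp [rootProdSubOne, eval_prod, sub_eq_zero]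

theorem monic_prod_X_sub_C_mul_X_sub_C (a : ι → R) (c : R) :
    ((∏ i, (X - C (a i))) * (X - C c)).Monic :=
  (monic_prod_of_monic _ _ fun i _ => monic_X_sub_C (a i)).mul (monic_X_sub_C c)

variable [Nontrivial R]

theorem natDegree_prod_X_sub_C_mul_X_sub_C (a : ι → R) (c : R) :
    ((∏ i, (X - C (a i))) * (X - C c)).natDegree = Fintype.card ι + 1 := by
  rw [(monic_prod_of_monic _ _ fun i _ => monic_X_sub_C (a i)).natDegree_mul (monic_X_sub_C c),
    natDegree_prod_of_monic _ _ fun i _ => monic_X_sub_C (a i)]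
  simp

theorem monic_rootProdSubOne (a : ι → R) (c : R) : (rootProdSubOne a c).Monic := by
  refine (monic_prod_X_sub_C_mul_X_sub_C a c).sub_of_left ?_
  rw [degree_one, ← natDegree_pos_iff_degree_pos, natDegree_prod_X_sub_C_mul_X_sub_C]
  exact Nat.succ_pos _

theorem natDegree_rootProdSubOne (a : ι → R) (c : R) :
    (rootProdSubOne a c).natDegree = Fintype.card ι + 1 := by
  rw [rootProdSubOne, ← C_1, natDegree_sub_C, natDegree_prod_X_sub_C_mul_X_sub_C]

end RootProdSubOne

theorem not_isRoot_map_rootProdSubOne {κ K ι : Type*} [Field κ] [Field K] [Algebra κ[X] K]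
    [IsFractionRing κ[X] K] [Fintype ι] [Nonempty ι] (a : ι → κ) {c : κ[X]} (hc : c.natDegree ≠ 0)
    (r : K) : ¬ ((rootProdSubOne (fun i => C (a i)) c).map (algebraMap κ[X] K)).IsRoot r := by
  intro hr
  have hr' : aeval r (rootProdSubOne (fun i => C (a i)) c) = 0 := by rwa [aeval_def, ← eval_map]
  obtain ⟨s, rfl⟩ := isInteger_of_is_root_of_monic (monic_rootProdSubOne _ c) hr'
  have hs : (∏ i, (s - C (a i))) * (s - c) = 1 :=
    isRoot_rootProdSubOne.1 ((isRoot_map_iff (IsFractionRing.injective κ[X] K)).1 hr)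
  obtain ⟨i₀⟩ := ‹Nonempty ι›
  have hsconst : s.natDegree = 0 := by
    rw [← natDegree_sub_C (a := a i₀)]
    exact natDegree_eq_zero_of_isUnit (IsUnit.prod_univ_iff.1 (.of_mul_eq_one _ hs) i₀)
  have hsc : (s - c).natDegree = 0 :=
    natDegree_eq_zero_of_isUnit (isUnit_of_dvd_one (hs ▸ dvd_mul_left _ _))
  rw [eq_C_of_natDegree_eq_zero hsconst, ← neg_sub, natDegree_neg, natDegree_sub_C] at hsc
  exact hc hsc

section Eisenstein

theorem map_divX {R S : Type*} [Semiring R] [Semiring S] (φ : R →+* S) (f : R[X]) :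
    f.divX.map φ = (f.map φ).divX := by
  ext n
  simp [coeff_divX]

theorem monic_divX {R : Type*} [Semiring R] {f : R[X]} (hf : f.Monic) (hdeg : f.natDegree ≠ 0) :
    f.divX.Monic := by
  rw [Monic, leadingCoeff, natDegree_divX_eq_natDegree_tsub_one, coeff_divX,
    Nat.sub_add_cancel (Nat.one_le_iff_ne_zero.2 hdeg), coeff_natDegree, hf.leadingCoeff]

theorem irreducible_divX_of_map_eq_X_pow {R S : Type*} [CommRing R] [IsDomain R] [CommRing S]
    [IsDomain S] {φ : R →+* S} {f : R[X]} (hf : f.Monic) (hdeg : 2 ≤ f.natDegree)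
    (hmap : f.map φ = X ^ f.natDegree) (hcoeff : f.coeff 1 ∉ RingHom.ker φ ^ 2) :
    Irreducible f.divX := by
  have hmonic := monic_divX hf (by lia)
  have hnatDegree := natDegree_divX_eq_natDegree_tsub_one (p := f)
  have heisenstein : f.divX.IsEisensteinAt (RingHom.ker φ) := by
    refine ⟨?_, fun {k} hk => ?_, by rwa [coeff_divX]⟩
    · rw [hmonic.leadingCoeff, RingHom.mem_ker, map_one]
      exact one_ne_zero
    · rw [RingHom.mem_ker, coeff_divX, ← coeff_map, hmap, coeff_X_pow, if_neg (by lia)]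
  exact heisenstein.irreducible (RingHom.ker_isPrime φ) hmonic.isPrimitive (by lia)

variable {ι : Type*} [Fintype ι]

theorem prod_zero_sub_mul_eq_one {R : Type*} [CommRing R] {a : ι → R} {u : R}
    (h : (∏ i, (X - C (a i))) * (X - C u) = X ^ (Fintype.card ι + 1) + 1) :
    (∏ i, (0 - a i)) * (0 - u) = 1 := by
  simpa [eval_prod] using congrArg (eval 0) h

/-- Congruence conditions modulo `p` and `p ^ 2` on integers `a i` under which the quotient by `X`
of `rootProdSubOne a c`, with `c` chosen so that the constant coefficient vanishes, is
`p`-Eisenstein: the first one makes it a power of `X` modulo `p`, the second one keeps its constant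
coefficient nonzero modulo `p ^ 2`. -/
structure IsEisensteinTuple (p : ℕ) (a : ι → ℤ) : Prop where
  exists_prod_eq : ∃ u : ZMod p,
    (∏ i, (X - C (a i : ZMod p))) * (X - C u) = X ^ (Fintype.card ι + 1) + 1
  coeff_ne_zero : (∏ i, (X - C (a i : ZMod (p ^ 2)))).coeff 0 ^ 2 +
    (∏ i, (X - C (a i : ZMod (p ^ 2)))).coeff 1 ≠ 0

namespace IsEisensteinTuple

variable {p : ℕ} {a : ι → ℤ}

theorem congr {b : ι → ℤ} (ha : IsEisensteinTuple p a) (h : ∀ i, a i ≡ b i [ZMOD (p ^ 2 : ℕ)]) :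
    IsEisensteinTuple p b := by
  have hsq (i : ι) : (a i : ZMod (p ^ 2)) = b i := (ZMod.intCast_eq_intCast_iff _ _ _).2 (h i)
  have hmod (i : ι) : (a i : ZMod p) = b i :=
    (ZMod.intCast_eq_intCast_iff _ _ _).2 ((h i).of_dvd (by simp [sq]))
  exact ⟨by simpa only [hmod] using ha.exists_prod_eq, by simpa only [hsq] using ha.coeff_ne_zero⟩

variable [Fact p.Prime]

theorem injective (ha : IsEisensteinTuple p a) (hp : ¬ p ∣ Fintype.card ι + 1) :
    Function.Injective a := by
  obtain ⟨u, hu⟩ := ha.exists_prod_eq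
  have hsep : (X ^ (Fintype.card ι + 1) - C (-1) : (ZMod p)[X]).Separable :=
    separable_X_pow_sub_C _ (mt (ZMod.natCast_eq_zero_iff _ _).1 hp) (by simp)
  rw [C_neg, C_1, sub_neg_eq_add, ← hu] at hsep
  exact (separable_prod_X_sub_C_iff.1 hsep.of_mul_left).of_comp

theorem ne_zero (ha : IsEisensteinTuple p a) (i : ι) : a i ≠ 0 := by
  obtain ⟨u, hu⟩ := ha.exists_prod_eq
  replace hu := prod_zero_sub_mul_eq_one hu
  intro hi
  rw [Finset.prod_eq_zero (Finset.mem_univ i) (by simp [hi]), zero_mul] at hu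
  exact zero_ne_one hu

end IsEisensteinTuple

theorem monic_divX_rootProdSubOne {R : Type*} [CommRing R] [Nontrivial R] (a : ι → R) (c : R) :
    (rootProdSubOne a c).divX.Monic :=
  monic_divX (monic_rootProdSubOne a c) (natDegree_rootProdSubOne a c ▸ Nat.succ_ne_zero _)

theorem coeff_one_rootProdSubOne_mul {R : Type*} [CommRing R] {a : ι → R} {c : R}
    (hroot : (rootProdSubOne a c).IsRoot 0) :
    (rootProdSubOne a c).coeff 1 * (∏ i, (X - C (a i))).coeff 0 =
      (∏ i, (X - C (a i))).coeff 0 ^ 2 + (∏ i, (X - C (a i))).coeff 1 := by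
  have hcoeff : (rootProdSubOne a c).coeff 1 =
      (∏ i, (X - C (a i))).coeff 0 - (∏ i, (X - C (a i))).coeff 1 * c := by
    rw [rootProdSubOne, coeff_sub, coeff_mul_X_sub_C, coeff_one, if_neg one_ne_zero, sub_zero]
  have hc : (∏ i, (X - C (a i))).coeff 0 * (0 - c) = 1 := by
    simpa [coeff_zero_eq_eval_zero, eval_prod] using isRoot_rootProdSubOne.1 hroot
  linear_combination (∏ i, (X - C (a i))).coeff 0 * hcoeff + (∏ i, (X - C (a i))).coeff 1 * hc

namespace IsEisensteinTuple

variable {p : ℕ} [Fact p.Prime] {a : ι → ℤ}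

theorem exists_padicInt_map_eq_X_pow (ha : IsEisensteinTuple p a) :
    ∃ c : ℤ_[p], (rootProdSubOne (fun i => (a i : ℤ_[p])) c).IsRoot 0 ∧
      (rootProdSubOne (fun i => (a i : ℤ_[p])) c).map PadicInt.toZMod =
        X ^ (Fintype.card ι + 1) := by
  obtain ⟨u, hu⟩ := ha.exists_prod_eq
  have hu0 := prod_zero_sub_mul_eq_one hu
  have hunit : IsUnit (∏ i, (0 - (a i : ℤ_[p]))) := by
    rw [← IsLocalRing.notMem_maximalIdeal, ← PadicInt.ker_toZMod, RingHom.mem_ker]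
    exact left_ne_zero_of_mul_eq_one (b := 0 - u) (by simpa using hu0)
  obtain ⟨v, hv⟩ := hunit.exists_right_inv
  have hvu : 0 - u = PadicInt.toZMod v := by
    refine mul_left_cancel₀ (left_ne_zero_of_mul_eq_one hu0) (hu0.trans ?_)
    simpa using (congrArg PadicInt.toZMod hv).symm
  refine ⟨-v, isRoot_rootProdSubOne.2 (by simpa using hv), ?_⟩
  rw [map_rootProdSubOne, rootProdSubOne, sub_eq_iff_eq_add, ← hu, map_neg, ← hvu]
  simp

theorem exists_padicInt_irreducible_divX [Nonempty ι] (ha : IsEisensteinTuple p a) :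
    ∃ c : ℤ_[p], (rootProdSubOne (fun i => (a i : ℤ_[p])) c).IsRoot 0 ∧
      Irreducible (rootProdSubOne (fun i => (a i : ℤ_[p])) c).divX := by
  obtain ⟨c, hc, hmap⟩ := ha.exists_padicInt_map_eq_X_pow
  have hnatDegree := natDegree_rootProdSubOne (fun i => (a i : ℤ_[p])) c
  refine ⟨c, hc, irreducible_divX_of_map_eq_X_pow (monic_rootProdSubOne _ c)
    (by have := Fintype.card_pos (α := ι); lia) (hnatDegree ▸ hmap) ?_⟩
  rw [PadicInt.ker_toZMod, PadicInt.maximalIdeal_eq_span_p, Ideal.span_singleton_pow,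
    ← PadicInt.ker_toZModPow, RingHom.mem_ker]
  intro hzero
  have hsum := congrArg (PadicInt.toZModPow 2) (coeff_one_rootProdSubOne_mul hc)
  rw [map_mul, hzero, zero_mul, map_add, map_pow, ← coeff_map, ← coeff_map] at hsum
  exact ha.coeff_ne_zero (by simpa [Polynomial.map_prod] using hsum.symm)

theorem irreducible_divX_rootProdSubOne [Nonempty ι] (ha : IsEisensteinTuple p a) {c : ℚ}
    (hc : (rootProdSubOne (fun i => (a i : ℚ)) c).IsRoot 0) :
    Irreducible (rootProdSubOne (fun i => (a i : ℚ)) c).divX := by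
  obtain ⟨d, hd, hirr⟩ := ha.exists_padicInt_irreducible_divX
  have hcd : (c : ℚ_[p]) = d := by
    have hc' : (∏ i, (0 - (a i : ℚ_[p]))) * (0 - c) = 1 := by
      exact_mod_cast congrArg (algebraMap ℚ ℚ_[p]) (isRoot_rootProdSubOne.1 hc)
    have hd' : (∏ i, (0 - (a i : ℚ_[p]))) * (0 - d) = 1 := by
      have := congrArg (algebraMap ℤ_[p] ℚ_[p]) (isRoot_rootProdSubOne.1 hd)
      rw [map_mul, map_prod] at this
      simpa using this
    exact sub_right_injective
      (mul_left_cancel₀ (left_ne_zero_of_mul_eq_one hc') (hc'.trans hd'.symm))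
  have hmap : (rootProdSubOne (fun i => (a i : ℚ)) c).divX.map (algebraMap ℚ ℚ_[p]) =
      (rootProdSubOne (fun i => (a i : ℤ_[p])) d).divX.map (algebraMap ℤ_[p] ℚ_[p]) := by
    simp [map_divX, map_rootProdSubOne, hcd]
  refine (monic_divX_rootProdSubOne _ c).irreducible_of_irreducible_map (algebraMap ℚ ℚ_[p]) _ ?_
  rw [hmap]
  exact (monic_divX_rootProdSubOne _ d).irreducible_iff_irreducible_map_fraction_map.1 hirr

end IsEisensteinTuple

end Eisenstein

section Existence

variable {ι : Type*} [Fintype ι]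

theorem exists_eq_prod_X_sub_C_of_splits {K : Type*} [Field K] {f : K[X]} (hf : f.Monic)
    (hsplits : f.Splits) (hcard : f.natDegree = Fintype.card ι) :
    ∃ b : ι → K, f = ∏ i, (X - C (b i)) := by
  classical
  have hequiv : Fintype.card ι = Fintype.card f.roots.ToType := by
    rw [Multiset.card_coe, ← hsplits.natDegree_eq_card_roots, hcard]
  let e := Fintype.equivOfCardEq hequiv
  refine ⟨fun i => (e i).1, ?_⟩
  rw [e.prod_comp fun x => X - C x.1]
  conv_lhs => rw [hsplits.eq_prod_roots_of_monic hf, ← Multiset.map_univ_coe f.roots,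
    Multiset.map_map]
  rfl

theorem exists_prod_X_sub_C_mul_X_sub_C_eq {p : ℕ} [Fact p.Prime]
    (hp : p ≡ 1 [MOD 2 * (Fintype.card ι + 1)]) :
    ∃ (b : ι → ZMod p) (u : ZMod p),
      (∏ i, (X - C (b i))) * (X - C u) = X ^ (Fintype.card ι + 1) + 1 := by
  set N := Fintype.card ι + 1
  have hone := (Fact.out : p.Prime).one_lt
  obtain ⟨k, hk⟩ := (Nat.modEq_iff_dvd' hone.le).1 hp.symm
  have hdvd : (X ^ N + 1 : (ZMod p)[X]) ∣ X ^ p - X := by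
    have hpow : (X ^ p - X : (ZMod p)[X]) = X * (X ^ (2 * N * k) - 1) := by
      rw [mul_sub, mul_one, ← pow_succ', ← hk, Nat.sub_add_cancel hone.le]
    have hsq : (X ^ (2 * N) - 1 : (ZMod p)[X]) = (X ^ N + 1) * (X ^ N - 1) := by ring
    rw [hpow]
    exact ((hsq ▸ dvd_mul_right _ _).trans (pow_one_sub_dvd_pow_mul_sub_one X (2 * N) k)).mul_left X
  have hsplits : (X ^ N + C 1 : (ZMod p)[X]).Splits :=
    (GaloisField.splits_zmod_X_pow_sub_X p).of_dvd
      (FiniteField.X_pow_card_sub_X_ne_zero (ZMod p) hone) hdvd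
  obtain ⟨b, hb⟩ := exists_eq_prod_X_sub_C_of_splits (ι := Option ι)
    (monic_X_pow_add_C 1 (Nat.succ_ne_zero _)) hsplits
    (by rw [natDegree_X_pow_add_C, Fintype.card_option])
  refine ⟨fun i => b (some i), b none, ?_⟩
  rw [mul_comm, ← Fintype.prod_option fun i => X - C (b i), ← hb, C_1]

theorem coeff_prod_X_sub_C_mul {R : Type*} [CommRing R] (s : R) (a : ι → R) (k : ℕ) :
    (∏ i, (X - C (s * a i))).coeff k * s ^ k =
      s ^ Fintype.card ι * (∏ i, (X - C (a i))).coeff k := by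
  rw [← comp_C_mul_X_coeff, ← coeff_C_mul, prod_comp]
  congr 1
  simp [← mul_sub, Finset.prod_mul_distrib]

theorem one_add_pow_of_sq_eq_zero {R : Type*} [CommRing R] {x : R} (hx : x ^ 2 = 0) (n : ℕ) :
    (1 + x) ^ n = 1 + n * x := by
  simpa [derivative_X_pow] using aeval_add_of_sq_eq_zero (X ^ n : R[X]) 1 x hx

theorem card_add_one_mul_eq_zero_of_coeff_eq_zero {R : Type*} [CommRing R] {x : R}
    (hx : x ^ 2 = 0) {a : ι → R} (ha : ∀ i, IsUnit (a i))
    (h : (∏ i, (X - C (a i))).coeff 0 ^ 2 + (∏ i, (X - C (a i))).coeff 1 = 0)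
    (h' : (∏ i, (X - C ((1 + x) * a i))).coeff 0 ^ 2 + (∏ i, (X - C ((1 + x) * a i))).coeff 1 = 0) :
    ((Fintype.card ι + 1 : ℕ) : R) * x = 0 := by
  have h0 := coeff_prod_X_sub_C_mul (1 + x) a 0
  have h1 := coeff_prod_X_sub_C_mul (1 + x) a 1
  rw [pow_zero, mul_one] at h0
  rw [pow_one] at h1
  have hcoeff : IsUnit ((∏ i, (X - C (a i))).coeff 0) := by
    simpa [coeff_zero_eq_eval_zero, eval_prod, IsUnit.prod_univ_iff] using ha
  have hunit : IsUnit (1 + x) := (show IsNilpotent x from ⟨2, hx⟩).isUnit_one_add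
  rw [← ((hunit.pow (Fintype.card ι)).mul (hcoeff.pow 2)).mul_right_eq_zero]
  have hpow := one_add_pow_of_sq_eq_zero hx (Fintype.card ι + 1)
  rw [h0] at h'
  linear_combination (1 + x) * h' - (1 + x) ^ Fintype.card ι * h - h1 -
    (1 + x) ^ Fintype.card ι * (∏ i, (X - C (a i))).coeff 0 ^ 2 * hpow

theorem exists_lift_coeff_ne_zero {p : ℕ} [Fact p.Prime] (hp : ¬ p ∣ Fintype.card ι + 1)
    {b : ι → ZMod p} (hb : ∀ i, b i ≠ 0) :
    ∃ a : ι → ℤ, (∀ i, (a i : ZMod p) = b i) ∧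
      (∏ i, (X - C (a i : ZMod (p ^ 2)))).coeff 0 ^ 2 +
        (∏ i, (X - C (a i : ZMod (p ^ 2)))).coeff 1 ≠ 0 := by
  choose a ha using fun i => ZMod.intCast_surjective (b i)
  -- Replacing `a` by `(1 + p) a` keeps its residues modulo `p` but scales the two summands by
  -- different powers of the unit `1 + p` of `ZMod (p ^ 2)`.
  by_contra! h
  have hsq : (p : ZMod (p ^ 2)) ^ 2 = 0 := by
    rw [← Nat.cast_pow, ZMod.natCast_self]
  have hunit (i : ι) : IsUnit (a i : ZMod (p ^ 2)) := by
    rw [ZMod.coe_int_isUnit_iff_isCoprime, Nat.cast_pow]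
    refine ((Nat.prime_iff_prime_int.1 Fact.out).coprime_iff_not_dvd.2 fun hdvd => hb i ?_).pow_left
    rw [← ha, (ZMod.intCast_zmod_eq_zero_iff_dvd _ _).2 hdvd]
  have hzero := card_add_one_mul_eq_zero_of_coeff_eq_zero hsq hunit (h a ha)
    (by simpa using h (fun i => (1 + p) * a i) (by simpa using ha))
  rw [← Nat.cast_mul, ZMod.natCast_eq_zero_iff, sq] at hzero
  exact hp (Nat.dvd_of_mul_dvd_mul_right (Fact.out : p.Prime).pos hzero)

variable (ι) in
theorem exists_isEisensteinTuple :
    ∃ (p : ℕ) (a : ι → ℤ), p.Prime ∧ ¬ p ∣ Fintype.card ι + 1 ∧ IsEisensteinTuple p a := by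
  obtain ⟨p, hp, hlt, hmod⟩ :=
    Nat.exists_prime_gt_modEq_one (k := 2 * (Fintype.card ι + 1)) (Fintype.card ι + 1) (by simp)
  have : Fact p.Prime := ⟨hp⟩
  have hndvd := Nat.not_dvd_of_pos_of_lt (Nat.succ_pos _) hlt
  obtain ⟨b, u, hbu⟩ := exists_prod_X_sub_C_mul_X_sub_C_eq hmod
  have hb (i : ι) : b i ≠ 0 := by
    have := left_ne_zero_of_mul_eq_one (prod_zero_sub_mul_eq_one hbu)
    simpa using Finset.prod_ne_zero_iff.1 this i (Finset.mem_univ i)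
  obtain ⟨a, hab, ha⟩ := exists_lift_coeff_ne_zero hndvd hb
  exact ⟨p, a, hp, hndvd, ⟨u, by simpa only [hab] using hbu⟩, ha⟩

end Existence

theorem mul_dvd_prod_of_ne {ι M : Type*} [Fintype ι] [CommMonoid M] (f : ι → M) {i j : ι}
    (h : i ≠ j) : f i * f j ∣ ∏ k, f k := by
  classical
  rw [← Finset.prod_pair h]
  exact Finset.prod_dvd_prod_of_subset _ _ _ (Finset.subset_univ _)

section Padic

theorem norm_sub_eq_right_of_norm_lt {S : Type*} [SeminormedAddGroup S] [IsUltrametricDist S]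
    {x y : S} (h : ‖x‖ < ‖y‖) : ‖x - y‖ = ‖y‖ := by
  rw [sub_eq_add_neg, IsUltrametricDist.norm_add_eq_max_of_norm_ne_norm (by simpa using h.ne),
    norm_neg, max_eq_right h.le]

theorem norm_sub_lt_trans {S : Type*} [SeminormedAddCommGroup S] [IsUltrametricDist S]
    {x y z : S} {r : ℝ} (hxy : ‖x - y‖ < r) (hyz : ‖y - z‖ < r) : ‖x - z‖ < r := by
  rw [← dist_eq_norm] at *
  exact (dist_triangle_max x y z).trans_lt (max_lt hxy hyz)

variable {q : ℕ} [Fact q.Prime]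

theorem exists_padicInt_isRoot_X_sub_C_mul_sub_C {g : ℤ_[q][X]} {α ε : ℤ_[q]} (hg : ‖g.eval α‖ = 1)
    (hε : ‖ε‖ < 1) : ∃ z, ((X - C α) * g - C ε).IsRoot z ∧ ‖z - α‖ < 1 := by
  have hderiv : ‖aeval α (derivative ((X - C α) * g - C ε))‖ = 1 := by
    simpa [derivative_mul] using hg
  obtain ⟨z, hz, hzα, -⟩ := hensels_lemma (F := (X - C α) * g - C ε) (a := α)
    (by rw [hderiv]; simpa using hε)
  exact ⟨z, by simpa using hz, hderiv ▸ hzα⟩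

theorem norm_one_sub_mul_eq_one {s : ℤ_[q]} (hs : ‖s‖ < 1) (x : ℤ_[q]) : ‖1 - s * x‖ = 1 := by
  rw [norm_sub_rev, norm_sub_eq_right_of_norm_lt, norm_one]
  rw [norm_mul, norm_one]
  exact mul_lt_one_of_nonneg_of_lt_one_left (norm_nonneg s) hs (PadicInt.norm_le_one x)

variable {ι : Type*} [Fintype ι] {a : ι → ℤ_[q]} {c : ℚ_[q]}

theorem exists_padicInt_coe_eq_inv (hc : 1 < ‖c‖) : ∃ s : ℤ_[q], (s : ℚ_[q]) = c⁻¹ ∧ ‖s‖ < 1 := by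
  have hlt : ‖c⁻¹‖ < 1 := by simpa using inv_lt_one_of_one_lt₀ hc
  exact ⟨⟨c⁻¹, hlt.le⟩, rfl, hlt⟩

theorem exists_isRoot_rootProdSubOne_near (hc : 1 < ‖c‖) {i : ι} (ha : ∀ j ≠ i, ‖a i - a j‖ = 1) :
    ∃ z : ℤ_[q], (rootProdSubOne (fun i => (a i : ℚ_[q])) c).IsRoot z ∧ ‖z - a i‖ < 1 := by
  classical
  obtain ⟨s, hsc, hs⟩ := exists_padicInt_coe_eq_inv hc
  have hc0 : c ≠ 0 := norm_pos_iff.1 (one_pos.trans hc)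
  obtain ⟨z, hz, hza⟩ := exists_padicInt_isRoot_X_sub_C_mul_sub_C (α := a i) (ε := -s)
    (g := (∏ j ∈ Finset.univ.erase i, (X - C (a j))) * (1 - C s * X))
    (by
      simp only [eval_mul, eval_prod, eval_sub, eval_X, eval_C, eval_one, norm_mul, norm_prod,
        norm_one_sub_mul_eq_one hs, mul_one]
      exact Finset.prod_eq_one fun j hj => ha j (Finset.ne_of_mem_erase hj))
    (by rwa [norm_neg])
  refine ⟨z, isRoot_rootProdSubOne.2 ?_, hza⟩
  have hz' : (∏ j, (z - a j)) * (1 - s * z) = -s := by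
    rw [← Finset.mul_prod_erase _ _ (Finset.mem_univ i), mul_assoc]
    simpa [eval_prod, eq_neg_iff_add_eq_zero] using hz
  replace hz' := congrArg (algebraMap ℤ_[q] ℚ_[q]) hz'
  rw [map_mul, map_prod] at hz'
  simp only [map_sub, map_mul, map_one, map_neg, PadicInt.algebraMap_apply, hsc] at hz'
  field_simp at hz'
  linear_combination -hz'

theorem exists_isRoot_rootProdSubOne_of_one_lt_norm [Nonempty ι] (a : ι → ℤ_[q]) (hc : 1 < ‖c‖) :
    ∃ x : ℚ_[q], (rootProdSubOne (fun i => (a i : ℚ_[q])) c).IsRoot x ∧ 1 < ‖x‖ := by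
  obtain ⟨s, hsc, hs⟩ := exists_padicInt_coe_eq_inv hc
  have hc0 : c ≠ 0 := norm_pos_iff.1 (one_pos.trans hc)
  -- The substitution `x = c + z` makes the equation integral in `z`.
  obtain ⟨z, hz, -⟩ := exists_padicInt_isRoot_X_sub_C_mul_sub_C (α := 0) (ε := s ^ Fintype.card ι)
    (g := ∏ j, (1 - C s * (C (a j) - X)))
    (by simp [eval_prod, norm_prod, norm_one_sub_mul_eq_one hs])
    (by rw [norm_pow]; exact pow_lt_one₀ (norm_nonneg s) hs Fintype.card_ne_zero)
  refine ⟨c + z, isRoot_rootProdSubOne.2 ?_, ?_⟩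
  · have hz' : (∏ j, (1 - s * (a j - z))) * z = s ^ Fintype.card ι := by
      simpa [eval_prod, sub_eq_zero, mul_comm] using hz
    replace hz' := congrArg (algebraMap ℤ_[q] ℚ_[q]) hz'
    rw [map_mul, map_prod] at hz'
    simp only [map_sub, map_mul, map_one, map_pow, PadicInt.algebraMap_apply, hsc] at hz'
    have hfactor (j : ι) : c + z - a j = c * (1 - c⁻¹ * (a j - z)) := by field_simp; ring
    simp only [hfactor, add_sub_cancel_left]
    rw [Finset.prod_mul_distrib, mul_assoc, hz', Finset.prod_const, Finset.card_univ, ← mul_pow,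
      mul_inv_cancel₀ hc0, one_pow]
  · have hzc : ‖(z : ℚ_[q])‖ < ‖c‖ := (PadicInt.norm_le_one z).trans_lt hc
    rwa [IsUltrametricDist.norm_add_eq_max_of_norm_ne_norm hzc.ne', max_eq_left hzc.le]

theorem card_le_card_ne_and_ne_add_two [DecidableEq ι] (i₁ i₂ : ι) :
    Fintype.card ι ≤ Fintype.card { i // i ≠ i₁ ∧ i ≠ i₂ } + 2 := by
  have hcompl : Finset.univ.filter (fun i => i ≠ i₁ ∧ i ≠ i₂) = {i₁, i₂}ᶜ := by ext; simp
  have htwo := Finset.card_le_two (a := i₁) (b := i₂)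
  rw [Fintype.card_subtype, hcompl, Finset.card_compl]
  lia

theorem exists_finset_isRoot_rootProdSubOne (hc : 1 < ‖c‖) {i₁ i₂ : ι}
    (ha : ∀ i, i ≠ i₁ → i ≠ i₂ → ∀ j ≠ i, ‖a i - a j‖ = 1) :
    ∃ s : Finset ℚ_[q], (∀ x ∈ s, (rootProdSubOne (fun i => (a i : ℚ_[q])) c).IsRoot x) ∧
      Fintype.card ι ≤ s.card + 1 := by
  classical
  have : Nonempty ι := ⟨i₁⟩
  obtain ⟨x, hx, hxnorm⟩ := exists_isRoot_rootProdSubOne_of_one_lt_norm a hc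
  choose z hz hza using fun i : { i // i ≠ i₁ ∧ i ≠ i₂ } =>
    exists_isRoot_rootProdSubOne_near hc (ha i i.2.1 i.2.2)
  have hinj : Function.Injective z := by
    intro i j hij
    by_contra hne
    have hlt : ‖a i - a j‖ < 1 :=
      norm_sub_lt_trans (y := z i) (norm_sub_rev (a i) _ ▸ hza i) (hij ▸ hza j)
    exact hlt.ne (ha i i.2.1 i.2.2 j fun h => hne (Subtype.ext h.symm))
  let s : Finset ℚ_[q] := Finset.univ.image (Subtype.val ∘ z)
  have hscard : Fintype.card ι ≤ s.card + 2 := by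
    rw [Finset.card_image_of_injective Finset.univ (Subtype.val_injective.comp hinj),
      Finset.card_univ]
    exact card_le_card_ne_and_ne_add_two i₁ i₂
  have hxs : x ∉ s := by
    intro hxs
    obtain ⟨i, -, rfl⟩ := Finset.mem_image.1 hxs
    exact hxnorm.not_ge (PadicInt.norm_le_one (z i))
  refine ⟨insert x s, fun y hy => ?_, by rwa [Finset.card_insert_of_notMem hxs]⟩
  obtain rfl | hy := Finset.mem_insert.1 hy
  · exact hx
  · obtain ⟨i, -, rfl⟩ := Finset.mem_image.1 hy
    exact hz i

theorem not_isRoot_rootProdSubOne_of_norm_sub_lt (hc : ‖c‖ = q) {i₁ i₂ : ι} (hne : i₁ ≠ i₂)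
    (h : ‖a i₁ - a i₂‖ < 1) {x : ℚ_[q]} (hx : ‖x - a i₁‖ < 1) :
    ¬ (rootProdSubOne (fun i => (a i : ℚ_[q])) c).IsRoot x := by
  classical
  have hq : (1 : ℝ) < q := mod_cast (Fact.out : q.Prime).one_lt
  obtain ⟨x, rfl⟩ : ∃ y : ℤ_[q], (y : ℚ_[q]) = x := by
    refine ⟨⟨x, ?_⟩, rfl⟩
    rw [← sub_add_cancel x (a i₁ : ℚ_[q])]
    exact PadicInt.norm_le_one (⟨x - a i₁, hx.le⟩ + a i₁)
  replace hx : ‖x - a i₁‖ < 1 := hx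
  intro hroot
  obtain ⟨w, hw⟩ : (q : ℤ_[q]) ^ 2 ∣ ∏ i, (x - a i) := by
    rw [sq]
    exact (mul_dvd_mul ((PadicInt.norm_lt_one_iff_dvd _).1 hx) ((PadicInt.norm_lt_one_iff_dvd _).1
      (norm_sub_lt_trans hx h))).trans (mul_dvd_prod_of_ne (fun i => x - a i) hne)
  have hxc : ‖x - c‖ = q := by
    have hlt : ‖(x : ℚ_[q])‖ < ‖c‖ := hc ▸ (PadicInt.norm_le_one x).trans_lt hq
    rw [norm_sub_eq_right_of_norm_lt hlt, hc]
  have hprod : ∏ i, ((x : ℚ_[q]) - a i) = q ^ 2 * w := by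
    simpa only [map_prod, map_sub, map_mul, map_pow, map_natCast, PadicInt.algebraMap_apply] using
      congrArg (algebraMap ℤ_[q] ℚ_[q]) hw
  have hnorm := congrArg norm (isRoot_rootProdSubOne.1 hroot)
  rw [hprod, norm_mul, norm_mul, norm_pow, hxc, Padic.norm_p, norm_one] at hnorm
  have hqw : ‖(w : ℚ_[q])‖ = q := by
    field_simp at hnorm
    exact hnorm
  exact hq.not_ge (hqw ▸ PadicInt.norm_le_one w)

theorem not_splits_rootProdSubOne (hc : ‖c‖ = q) {i₁ i₂ : ι} (hne : i₁ ≠ i₂)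
    (h : ‖a i₁ - a i₂‖ < 1) : ¬ (rootProdSubOne (fun i => (a i : ℚ_[q])) c).Splits := by
  intro hsplits
  have : Nonempty ι := ⟨i₁⟩
  have hq : (1 : ℝ) < q := mod_cast (Fact.out : q.Prime).one_lt
  obtain ⟨x, hx, hxnorm⟩ := exists_isRoot_rootProdSubOne_of_one_lt_norm a (hc ▸ hq)
  have hmonic := monic_rootProdSubOne (fun i => (a i : ℚ_[q])) c
  have heval : eval (a i₁ : ℚ_[q]) (rootProdSubOne (fun i => (a i : ℚ_[q])) c) = -1 := by
    simp [rootProdSubOne, eval_prod, Finset.prod_eq_zero (Finset.mem_univ i₁)]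
  obtain ⟨t, ht⟩ := Multiset.exists_cons_of_mem ((mem_roots hmonic.ne_zero).2 hx)
  have htnorm : 1 ≤ ‖(t.map fun r => (a i₁ : ℚ_[q]) - r).prod‖ := by
    refine Multiset.prod_induction (fun y => 1 ≤ ‖y‖) _ (fun y z hy hz => ?_) norm_one.ge ?_
    · exact (one_le_mul_of_one_le_of_one_le hy hz).trans_eq (norm_mul y z).symm
    · intro y hy
      obtain ⟨r, hr, rfl⟩ := Multiset.mem_map.1 hy
      by_contra! hlt
      exact not_isRoot_rootProdSubOne_of_norm_sub_lt hc hne h (norm_sub_rev r _ ▸ hlt)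
        (isRoot_of_mem_roots (ht ▸ Multiset.mem_cons_of_mem hr))
  have hxdist : 1 < ‖(a i₁ : ℚ_[q]) - x‖ := by
    have hlt : ‖(a i₁ : ℚ_[q])‖ < ‖x‖ := (PadicInt.norm_le_one (a i₁)).trans_lt hxnorm
    rwa [norm_sub_eq_right_of_norm_lt hlt]
  have hprod := congrArg norm (hsplits.eval_eq_prod_roots_of_monic hmonic (a i₁ : ℚ_[q]))
  rw [heval, ht, Multiset.map_cons, Multiset.prod_cons, norm_neg, norm_one, norm_mul] at hprod
  exact (one_lt_mul_of_lt_of_le hxdist htnorm).ne hprod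

end Padic

section Congruences

theorem exists_int_modEq_and_modEq {m n : ℤ} (h : IsCoprime m n) (x y : ℤ) :
    ∃ z, x ≡ z [ZMOD m] ∧ y ≡ z [ZMOD n] := by
  obtain ⟨u, v, huv⟩ := h
  refine ⟨x * (v * n) + y * (u * m), Int.modEq_iff_dvd.2 ⟨u * (y - x), ?_⟩,
    Int.modEq_iff_dvd.2 ⟨v * (x - y), ?_⟩⟩
  · linear_combination x * huv
  · linear_combination y * huv

theorem exists_prime_and_modEq_and_dvd {ι : Type*} [Finite ι] {M : ℕ} (hM : M ≠ 0) (N : ℕ)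
    (b : ι → ℤ) (i₁ i₂ : ι) :
    ∃ (q : ℕ) (a : ι → ℤ), q.Prime ∧ N < q ∧ (∀ i, b i ≡ a i [ZMOD M]) ∧
      (q : ℤ) ∣ a i₁ ∧ (q : ℤ) ∣ a i₂ ∧
      ∀ i, i ≠ i₁ → i ≠ i₂ → ∀ j ≠ i, ¬ (q : ℤ) ∣ a i - a j := by
  classical
  obtain ⟨k, ⟨e⟩⟩ := Finite.exists_equiv_fin ι
  let r : ι → ℤ := fun i => if i = i₁ ∨ i = i₂ then 0 else e i + 1
  have hr (i : ι) : 0 ≤ r i ∧ r i ≤ k := by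
    have := (e i).is_lt
    simp only [r]
    split_ifs <;> lia
  have hr₁ : r i₁ = 0 := if_pos (.inl rfl)
  have hr₂ : r i₂ = 0 := if_pos (.inr rfl)
  obtain ⟨q, hqlt, hq⟩ := Nat.exists_infinite_primes (M + N + k + 1)
  have hcoprime : IsCoprime (M : ℤ) q :=
    (Nat.coprime_of_lt_prime hM (by lia) hq).isCoprime.symm
  choose a hab har using fun i => exists_int_modEq_and_modEq hcoprime (b i) (r i)
  refine ⟨q, a, hq, by lia, hab, ?_, ?_, fun i hi₁ hi₂ j hji hdvd => hji ?_⟩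
  · simpa [hr₁] using (har i₁).dvd
  · simpa [hr₂] using (har i₂).dvd
  · have hdvd' : (q : ℤ) ∣ r j - r i :=
      ((har i).trans ((Int.modEq_iff_dvd.2 hdvd).symm.trans (har j).symm)).dvd
    have hrj : r j = r i := sub_eq_zero.1 <| Int.eq_zero_of_abs_lt_dvd hdvd' <|
      abs_lt.2 (by have := hr i; have := hr j; lia)
    simp only [r, hi₁, hi₂, or_self, if_false] at hrj
    split_ifs at hrj
    · lia
    · exact e.injective (Fin.ext (by lia))

end Congruences

section Embedding

theorem exists_ratFunc_ringHom_X_eq {κ L : Type*} [Field κ] [Field L] [Algebra κ L] {t : L}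
    (ht : Transcendental κ t) : ∃ φ : RatFunc κ →+* L, φ RatFunc.X = t :=
  ⟨(algebraMap _ L).comp (RatFunc.algEquivOfTranscendental t ht).toRingEquiv.toRingHom,
    RatFunc.algEquivOfTranscendental_X t ht⟩

variable {q : ℕ} [Fact q.Prime]

theorem exists_transcendental_norm_sub_lt (x : ℚ_[q]) {ε : ℝ} (hε : 0 < ε) :
    ∃ t : ℚ_[q], Transcendental ℚ t ∧ ‖t - x‖ < ε := by
  obtain ⟨t, ht, htx⟩ := ((Algebraic.countable ℚ ℚ_[q]).dense_compl ℚ_[q]).exists_dist_lt x hε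
  exact ⟨t, ht, by rwa [← dist_eq_norm, dist_comm]⟩

theorem norm_pow_sub_one_eq {ℓ : ℕ} (hℓ : ¬ q ∣ ℓ) {t : ℤ_[q]} (ht : ‖t - 1‖ < 1) :
    ‖t ^ ℓ - 1‖ = ‖t - 1‖ := by
  have htmod : PadicInt.toZMod t = 1 := by
    rw [← sub_eq_zero, ← map_one PadicInt.toZMod, ← map_sub, ← RingHom.mem_ker,
      PadicInt.ker_toZMod]
    exact PadicInt.mem_nonunits.2 ht
  have hsum : IsUnit (∑ i ∈ Finset.range ℓ, t ^ i) := by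
    rw [← IsLocalRing.notMem_maximalIdeal, ← PadicInt.ker_toZMod, RingHom.mem_ker]
    simpa [htmod, ZMod.natCast_eq_zero_iff] using hℓ
  rw [← geom_sum_mul, norm_mul, PadicInt.isUnit_iff.1 hsum, one_mul]

theorem exists_ratFunc_ringHom_norm_X_pow_sub_one_eq {ℓ : ℕ} (hℓ : ¬ q ∣ ℓ) {x : ℚ_[q]}
    (hx : x ≠ 0) (hx1 : ‖x‖ < 1) :
    ∃ φ : RatFunc ℚ →+* ℚ_[q], ‖φ (RatFunc.X ^ ℓ - 1)‖ = ‖x‖ := by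
  obtain ⟨t, htrans, ht⟩ := exists_transcendental_norm_sub_lt (1 + x) (norm_pos_iff.2 hx)
  obtain ⟨φ, rfl⟩ := exists_ratFunc_ringHom_X_eq htrans
  have hnorm : ‖φ RatFunc.X - 1‖ = ‖x‖ := by
    rw [← sub_sub] at ht
    rw [← sub_add_cancel (φ RatFunc.X - 1) x,
      IsUltrametricDist.norm_add_eq_max_of_norm_ne_norm ht.ne, max_eq_right ht.le]
  have hle : ‖φ RatFunc.X‖ ≤ 1 := by
    rw [← sub_add_cancel (φ RatFunc.X) 1]
    exact PadicInt.norm_le_one (⟨φ RatFunc.X - 1, (hnorm.trans_lt hx1).le⟩ + 1)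
  refine ⟨φ, ?_⟩
  rw [map_sub, map_pow, map_one, ← hnorm]
  exact norm_pow_sub_one_eq hℓ (t := ⟨φ RatFunc.X, hle⟩) (hnorm.trans_lt hx1)

end Embedding

section MainPoly

/-- `mainPoly` with coefficients in `ℚ[t]`: base change to `ℚ(t)` gives `mainPoly`, and setting
`t = 0` gives `mainPolyZero`. -/
noncomputable def integralMainPoly (n ℓ : ℕ) (a : Fin (n - 1) → ℤ) : ℚ[X][X] :=
  rootProdSubOne (fun i => C (a i : ℚ)) (C ((-1) ^ (n - 1) / ((∏ i, a i : ℤ) : ℚ)) * (X ^ ℓ - 1))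

variable {n ℓ : ℕ} {a : Fin (n - 1) → ℤ}

theorem mainPoly_eq_map (n ℓ : ℕ) (a : Fin (n - 1) → ℤ) :
    mainPoly n ℓ a = (integralMainPoly n ℓ a).map (algebraMap ℚ[X] (RatFunc ℚ)) := by
  rw [integralMainPoly, map_rootProdSubOne]
  simp [mainPoly, rootProdSubOne, RatFunc.algebraMap_X, mul_div_right_comm]

theorem mainPolyZero_eq_map (n ℓ : ℕ) (a : Fin (n - 1) → ℤ) :
    mainPolyZero n ℓ a = (integralMainPoly n ℓ a).map (evalRingHom 0) := by
  rw [integralMainPoly, map_rootProdSubOne]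
  simp [mainPolyZero, rootProdSubOne, mul_div_right_comm]

theorem monic_integralMainPoly (n ℓ : ℕ) (a : Fin (n - 1) → ℤ) : (integralMainPoly n ℓ a).Monic :=
  monic_rootProdSubOne _ _

theorem map_mainPoly {L : Type*} [Field L] (φ : RatFunc ℚ →+* L) :
    (mainPoly n ℓ a).map φ = rootProdSubOne (fun i => (a i : L))
      ((-1) ^ (n - 1) * φ (RatFunc.X ^ ℓ - 1) / ((∏ i, a i : ℤ) : L)) := by
  refine (map_rootProdSubOne φ (fun i => (a i : RatFunc ℚ)) _).trans ?_
  simp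

theorem natDegree_mainPoly (hn : n ≠ 0) : (mainPoly n ℓ a).natDegree = n := by
  rw [mainPoly_eq_map, integralMainPoly, map_rootProdSubOne, natDegree_rootProdSubOne,
    Fintype.card_fin]
  lia

theorem natDegree_mainPolyZero (hn : n ≠ 0) : (mainPolyZero n ℓ a).natDegree = n := by
  rw [mainPolyZero_eq_map, integralMainPoly, map_rootProdSubOne, natDegree_rootProdSubOne,
    Fintype.card_fin]
  lia

theorem not_isRoot_mainPoly (hn : 2 ≤ n) (hℓ : ℓ ≠ 0) (ha : ∀ i, a i ≠ 0) (r : RatFunc ℚ) :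
    ¬ (mainPoly n ℓ a).IsRoot r := by
  have : Nonempty (Fin (n - 1)) := ⟨⟨0, by lia⟩⟩
  rw [mainPoly_eq_map, integralMainPoly]
  refine not_isRoot_map_rootProdSubOne (fun i => (a i : ℚ)) ?_ r
  have hprod : ((∏ i, a i : ℤ) : ℚ) ≠ 0 := by simpa [Finset.prod_eq_zero_iff] using ha
  rwa [natDegree_C_mul (div_ne_zero (by simp) hprod), ← C_1, natDegree_X_pow_sub_C]

theorem isRoot_mainPolyZero_zero (hℓ : ℓ ≠ 0) (ha : ∀ i, a i ≠ 0) :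
    (mainPolyZero n ℓ a).IsRoot 0 := by
  have hprod : ∏ i, (a i : ℚ) ≠ 0 := by simpa [Finset.prod_eq_zero_iff] using ha
  refine isRoot_rootProdSubOne.2 ?_
  simp only [zero_sub, Finset.prod_neg, Finset.card_univ, Fintype.card_fin, zero_pow hℓ,
    Int.cast_prod]
  field_simp
  rw [← pow_mul, mul_comm, pow_mul, neg_one_sq, one_pow]

open scoped RatFunc LaurentSeries

section EisensteinTuple

variable {p : ℕ} [Fact p.Prime]

theorem exists_mainPolyZero_eq_X_sub_C_zero_mul (hn : 2 ≤ n) (hℓ : ℓ ≠ 0)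
    (ha : IsEisensteinTuple p a) :
    ∃ g, mainPolyZero n ℓ a = (X - C 0) * g ∧ Irreducible g := by
  have : Nonempty (Fin (n - 1)) := ⟨⟨0, by lia⟩⟩
  have hroot := isRoot_mainPolyZero_zero hℓ ha.ne_zero
  refine ⟨(mainPolyZero n ℓ a).divX, ?_, ha.irreducible_divX_rootProdSubOne hroot⟩
  rw [C_0, sub_zero, ← add_zero (X * _), ← C_0, ← hroot.eq_zero, ← coeff_zero_eq_eval_zero,
    X_mul_divX_add]

theorem separable_mainPolyZero (hn : 3 ≤ n) (hℓ : ℓ ≠ 0) (ha : IsEisensteinTuple p a) :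
    (mainPolyZero n ℓ a).Separable := by
  obtain ⟨g, hfac, hg⟩ := exists_mainPolyZero_eq_X_sub_C_zero_mul (by lia) hℓ ha
  exact separable_of_eq_X_sub_C_mul hfac hg (by rw [natDegree_mainPolyZero] <;> lia)

theorem exists_map_mainPoly_laurentSeries_eq (hn : 3 ≤ n) (hℓ : ℓ ≠ 0)
    (ha : IsEisensteinTuple p a) :
    ∃ (θ : ℚ⸨X⸩) (g : ℚ⸨X⸩[X]),
      (mainPoly n ℓ a).map (algebraMap (RatFunc ℚ) ℚ⸨X⸩) = (X - C θ) * g ∧ Irreducible g := by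
  obtain ⟨g, hfac, hg⟩ := exists_mainPolyZero_eq_X_sub_C_zero_mul (by lia) hℓ ha
  have hg0 : ¬ g.IsRoot 0 := by
    refine hg.not_isRoot_of_natDegree_ne_one fun hdeg => ?_
    have hn' := natDegree_mainPolyZero (ℓ := ℓ) (a := a) (by lia)
    rw [hfac, natDegree_mul (X_sub_C_ne_zero 0) hg.ne_zero, natDegree_X_sub_C] at hn'
    lia
  rw [mainPoly_eq_map, Polynomial.map_map, ← IsScalarTower.algebraMap_eq]
  exact exists_map_laurentSeries_eq_X_sub_C_mul_irreducible (monic_integralMainPoly n ℓ a)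
    ((mainPolyZero_eq_map n ℓ a).symm.trans hfac) hg0 hg

theorem separable_mainPoly (hn : 3 ≤ n) (hℓ : ℓ ≠ 0) (ha : IsEisensteinTuple p a) :
    (mainPoly n ℓ a).Separable := by
  obtain ⟨θ, g, hfac, hg⟩ := exists_map_mainPoly_laurentSeries_eq hn hℓ ha
  have : CharZero ℚ⸨X⸩ := algebraRat.charZero _
  rw [← separable_map (algebraMap (RatFunc ℚ) ℚ⸨X⸩)]
  exact separable_of_eq_X_sub_C_mul hfac hg
    (by rw [natDegree_map, natDegree_mainPoly] <;> lia)

end EisensteinTuple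

theorem norm_intCast_div_lt_one {q : ℕ} [Fact q.Prime] {k : ℤ} (h : (q : ℤ) ^ 2 ∣ k) :
    ‖(k / q : ℚ_[q])‖ < 1 := by
  obtain ⟨w, rfl⟩ := h
  have hq0 : (q : ℚ_[q]) ≠ 0 := mod_cast (Fact.out : q.Prime).ne_zero
  have hdiv : (((q : ℤ) ^ 2 * w : ℤ) / q : ℚ_[q]) = ((q * w : ℤ) : ℚ_[q]) := by
    push_cast
    field_simp
  rw [hdiv, Padic.norm_intCast_lt_one_iff]
  exact dvd_mul_right _ _

theorem exists_padic_ringHom_mainPoly {q : ℕ} [Fact q.Prime] (hℓ : ¬ q ∣ ℓ) (ha : ∀ i, a i ≠ 0)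
    {i₁ i₂ : Fin (n - 1)} (hne : i₁ ≠ i₂) (h₁ : (q : ℤ) ∣ a i₁) (h₂ : (q : ℤ) ∣ a i₂)
    (hndvd : ∀ i, i ≠ i₁ → i ≠ i₂ → ∀ j ≠ i, ¬ (q : ℤ) ∣ a i - a j) :
    ∃ φ : RatFunc ℚ →+* ℚ_[q], (∃ s : Finset ℚ_[q],
      (∀ x ∈ s, ((mainPoly n ℓ a).map φ).IsRoot x) ∧ n ≤ s.card + 2) ∧
      ¬ ((mainPoly n ℓ a).map φ).Splits := by
  have hq : (1 : ℝ) < q := mod_cast (Fact.out : q.Prime).one_lt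
  have hq0 : (q : ℚ_[q]) ≠ 0 := mod_cast (Fact.out : q.Prime).ne_zero
  have hprod : ((∏ i, a i : ℤ) : ℚ_[q]) ≠ 0 := by simpa [Finset.prod_eq_zero_iff] using ha
  have hdvd : (q : ℤ) ^ 2 ∣ ∏ i, a i :=
    sq (q : ℤ) ▸ (mul_dvd_mul h₁ h₂).trans (mul_dvd_prod_of_ne a hne)
  obtain ⟨φ, hφ⟩ := exists_ratFunc_ringHom_norm_X_pow_sub_one_eq hℓ (div_ne_zero hprod hq0)
    (norm_intCast_div_lt_one hdvd)
  refine ⟨φ, ?_⟩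
  set c := (-1) ^ (n - 1) * φ (RatFunc.X ^ ℓ - 1) / ((∏ i, a i : ℤ) : ℚ_[q]) with hcdef
  have hc : ‖c‖ = q := by
    rw [hcdef, norm_div, norm_mul, hφ, norm_pow, norm_neg, norm_one, one_pow, one_mul, norm_div,
      Padic.norm_p, div_inv_eq_mul, mul_div_cancel_left₀ _ (norm_ne_zero_iff.2 hprod)]
  have hmap : (mainPoly n ℓ a).map φ = rootProdSubOne (fun i => ((a i : ℤ_[q]) : ℚ_[q])) c := by
    simp only [map_mainPoly, PadicInt.coe_intCast, hcdef]
  rw [hmap]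
  refine ⟨?_, not_splits_rootProdSubOne hc hne ?_⟩
  · obtain ⟨s, hs, hcard⟩ := exists_finset_isRoot_rootProdSubOne (a := fun i => (a i : ℤ_[q]))
      (hc ▸ hq) fun i hi₁ hi₂ j hj => by
        rw [← Int.cast_sub]
        exact le_antisymm (PadicInt.norm_le_one _)
          (not_lt.1 (mt PadicInt.norm_intCast_lt_one_iff.1 (hndvd i hi₁ hi₂ j hj)))
    exact ⟨s, hs, by rw [Fintype.card_fin] at hcard; lia⟩
  · rw [← Int.cast_sub, PadicInt.norm_intCast_lt_one_iff]
    exact dvd_sub h₁ h₂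

theorem nonempty_gal_mainPoly_mulEquiv_perm {p q : ℕ} [Fact p.Prime] [Fact q.Prime] (hn : 3 ≤ n)
    (hℓ : ℓ ≠ 0) (hqℓ : ¬ q ∣ ℓ) (ha : IsEisensteinTuple p a) {i₁ i₂ : Fin (n - 1)} (hne : i₁ ≠ i₂)
    (h₁ : (q : ℤ) ∣ a i₁) (h₂ : (q : ℤ) ∣ a i₂)
    (hndvd : ∀ i, i ≠ i₁ → i ≠ i₂ → ∀ j ≠ i, ¬ (q : ℤ) ∣ a i - a j) :
    Nonempty ((mainPoly n ℓ a).Gal ≃* Equiv.Perm (Fin n)) := by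
  obtain ⟨θ, g, hfac, hg⟩ := exists_map_mainPoly_laurentSeries_eq hn hℓ ha
  obtain ⟨φ, ⟨s, hs, hcard⟩, hns⟩ :=
    exists_padic_ringHom_mainPoly hqℓ ha.ne_zero hne h₁ h₂ hndvd
  let := φ.toAlgebra
  have hdeg : (mainPoly n ℓ a).natDegree = n := natDegree_mainPoly (by lia)
  have hgal := nonempty_gal_mulEquiv_perm_of_extensions (separable_mainPoly hn hℓ ha)
    (not_isRoot_mainPoly (by lia) hℓ ha.ne_zero) hfac hg
    (fun x hx => (eval_map_algebraMap _ x).symm.trans (hs x hx)) (hdeg.symm ▸ hcard) hns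
  rwa [hdeg] at hgal

end MainPoly

/-- **Theorem 5.1.**  Let `n ≥ 3` and `ℓ ≥ 1`.  There exist pairwise distinct nonzero
integers `a_1,…,a_{n-1}` such that the polynomial `f(t,x)` is separable over `ℚ(t)`
with Galois group isomorphic to the symmetric group `S_n`, and `f(0,x) ∈ ℚ[x]` is
separable. -/
theorem main_poly_exists (n ℓ : ℕ) (hn : 3 ≤ n) (hℓ : 1 ≤ ℓ) :
    ∃ a : Fin (n - 1) → ℤ, Function.Injective a ∧ (∀ i, a i ≠ 0) ∧
      (mainPoly n ℓ a).Separable ∧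
      Nonempty ((mainPoly n ℓ a).Gal ≃* Equiv.Perm (Fin n)) ∧
      (mainPolyZero n ℓ a).Separable := by
  obtain ⟨p, b, hp, hpcard, hb⟩ := exists_isEisensteinTuple (Fin (n - 1))
  obtain ⟨q, a, hq, hℓq, hab, h₁, h₂, hndvd⟩ := exists_prime_and_modEq_and_dvd
    (pow_ne_zero 2 hp.ne_zero) ℓ b ⟨0, by lia⟩ ⟨1, by lia⟩
  have : Fact p.Prime := ⟨hp⟩
  have : Fact q.Prime := ⟨hq⟩
  have ha : IsEisensteinTuple p a := hb.congr hab
  have hℓ0 : ℓ ≠ 0 := Nat.one_le_iff_ne_zero.1 hℓ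
  have hqℓ : ¬ q ∣ ℓ := Nat.not_dvd_of_pos_of_lt hℓ hℓq
  exact ⟨a, ha.injective hpcard, ha.ne_zero, separable_mainPoly hn hℓ0 ha,
    nonempty_gal_mainPoly_mulEquiv_perm hn hℓ0 hqℓ ha (by simp) h₁ h₂ hndvd,
    separable_mainPolyZero hn hℓ0 ha⟩
end
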